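/- arXiv:1512.05966 — 2 statements merged into one kernel-verified Lean document; each statement's English description precedes it below -/
import Mathlib

section
/- Let B be a subset of the Cantor space 2^ω which is a countable union of Gδ sets and satisfies λ(B) = 0. Then there exists a martingale f with B = D(f). -/
open MeasureTheory Filter Topology
open scoped ENNReal

/-- The basic cylinder `N_s` determined by a finite binary sequence `s`:
the set of all `β ∈ 2^ω` extending `s`. -/
def cyl (s : List Bool) : Set (ℕ → Bool) :=
  {β | ∀ i : Fin s.length, β i = s.get i}

/-- The initial segment `β↾l` of `β ∈ 2^ω`, as a finite binary sequence. -/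
def seg (β : ℕ → Bool) (l : ℕ) : List Bool := List.ofFn (fun i : Fin l => β i)

/-- A martingale: a `[0,1]`-valued function on finite binary sequences with
`f(s) = (f(s⌢0) + f(s⌢1))/2`. -/
def IsMartingale (f : List Bool → ℝ) : Prop :=
  (∀ s, f s ∈ Set.Icc (0:ℝ) 1) ∧
  ∀ s, f s = (f (s ++ [false]) + f (s ++ [true])) / 2

/-- The oscillation `osc(f,β) = inf_N sup_{p,q ≥ N} |f(β↾p) − f(β↾q)|`. -/
noncomputable def osc (f : List Bool → ℝ) (β : ℕ → Bool) : ℝ :=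
  ⨅ N : ℕ, ⨆ p : {n : ℕ // N ≤ n}, ⨆ q : {n : ℕ // N ≤ n},
    |f (seg β p.1) - f (seg β q.1)|

/-- The set of divergence `D(f) = {β : osc(f,β) > 0}`. -/
def divSet (f : List Bool → ℝ) : Set (ℕ → Bool) := {β | 0 < osc f β}

/-- `M` has density 1 at `β`: `λ(M ∩ N_{β↾l}) / λ(N_{β↾l}) → 1`. -/
def densityOne (μ : Measure (ℕ → Bool)) (M : Set (ℕ → Bool)) (β : ℕ → Bool) : Prop :=
  Tendsto (fun l : ℕ => μ (M ∩ cyl (seg β l)) / μ (cyl (seg β l))) atTop (𝓝 1)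

/-- A set is `Σ⁰₃` iff it is a countable union of `Gδ` sets. -/
def IsSigma03 {X : Type*} [TopologicalSpace X] (S : Set X) : Prop :=
  ∃ g : ℕ → Set X, (∀ n, IsGδ (g n)) ∧ S = ⋃ n, g n

/-- A set is coanalytic (`Π¹₁`) iff its complement is analytic. -/
def IsCoanalytic {X : Type*} [TopologicalSpace X] (S : Set X) : Prop :=
  MeasureTheory.AnalyticSet Sᶜ

/-- The associated (partial) function of a martingale: `ψ(f)(β) = lim_l f(β↾l)`
(a junk value if the limit does not exist). -/
noncomputable def psi (f : List Bool → ℝ) (β : ℕ → Bool) : ℝ :=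
  limUnder atTop (fun l => f (seg β l))

/-!
If an open set `B` contains the closure of an open set `A` in the density topology, there is an open
set `C` that contains the density closure of `A` and whose own density closure is contained in `B`
(the Lusin–Menchoff property). Iterating this as in Urysohn's lemma and averaging the
martingales `s ↦ λ(C ∩ N_s) / λ(N_s)` yields a martingale which converges along every point and
lies between the relative measures of two strongly nested open sets.

A null `Gδ` set `G` is the intersection of strongly nested open sets `V k`, chosen so thin that
`V (k + 1)` has relative measure at most `1 / 4` in each maximal cylinder of `V k`. Let `h i` be the
Urysohn martingale between `V (2 * i + 1)` and `V (2 * i)`. The alternating sum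
`h 0 - h 1 + h 2 - ⋯` converges along every point outside `G`, where all but finitely many terms
tend to `0`. Along a point of `G`, the maximal cylinder of `V (2 * m + 1)` is reached when
`h 0, …, h m` are `1` and `h (m + 1)` is at most `1 / 4`, so the sum oscillates between values above
`3 / 4` and below `1 / 4`. A rapidly decreasing weighted sum of such martingales handles a countable
union: the first term that oscillates cannot be compensated by the later ones.
-/

namespace CantorSpace

open scoped ProbabilityTheory

variable {μ : Measure (ℕ → Bool)} {A B G O V : Set (ℕ → Bool)} {P : Set (List Bool)}
  {U : List Bool → Set (ℕ → Bool)} {β : ℕ → Bool} {s t : List Bool} {k l m n : ℕ}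

/-! ### Cylinders -/

lemma length_seg (β : ℕ → Bool) (l : ℕ) : (seg β l).length = l := List.length_ofFn

lemma seg_eq_iff : seg β s.length = s ↔ β ∈ cyl s := by
  simp [List.ext_get_iff, cyl, seg, Fin.forall_iff]

lemma take_seg (β : ℕ → Bool) (h : k ≤ l) : (seg β l).take k = seg β k :=
  List.ext_getElem (by simp [seg, h]) fun i _ _ => by simp [seg]

lemma cyl_seg (β : ℕ → Bool) (l : ℕ) : cyl (seg β l) = PiNat.cylinder β l := by
  ext γ
  simp [cyl, seg, PiNat.cylinder, Fin.forall_iff]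

lemma mem_cyl_seg (β : ℕ → Bool) (l : ℕ) : β ∈ cyl (seg β l) :=
  cyl_seg β l ▸ PiNat.self_mem_cylinder β l

lemma cyl_seg_anti (β : ℕ → Bool) (h : k ≤ l) : cyl (seg β l) ⊆ cyl (seg β k) := by
  simpa only [cyl_seg] using PiNat.cylinder_anti β h

lemma nonempty_cyl (s : List Bool) : (cyl s).Nonempty :=
  ⟨fun i => s.getD i false, fun i => by simp⟩

lemma isOpen_cyl (s : List Bool) : IsOpen (cyl s) := by
  obtain ⟨β, hβ⟩ := nonempty_cyl s
  rw [← seg_eq_iff.2 hβ, cyl_seg]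
  exact PiNat.isOpen_cylinder _ β s.length

lemma measurableSet_cyl (s : List Bool) : MeasurableSet (cyl s) := (isOpen_cyl s).measurableSet

lemma eventually_cyl_seg_subset (hV : IsOpen V) (hβ : β ∈ V) :
    ∀ᶠ l in atTop, cyl (seg β l) ⊆ V := by
  obtain ⟨_, ⟨γ, n, rfl⟩, hβn, hnV⟩ :=
    (PiNat.isTopologicalBasis_cylinders fun _ => Bool).exists_subset_of_mem_open hβ hV
  filter_upwards [eventually_ge_atTop n] with l hl
  rw [← PiNat.mem_cylinder_iff_eq.1 hβn, ← cyl_seg] at hnV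
  exact (cyl_seg_anti β hl).trans hnV

lemma seg_succ (β : ℕ → Bool) (l : ℕ) : seg β (l + 1) = seg β l ++ [β l] := by
  rw [seg, List.ofFn_succ_last]
  rfl

lemma mem_cyl_append_singleton {b : Bool} : β ∈ cyl (s ++ [b]) ↔ β ∈ cyl s ∧ β s.length = b := by
  rw [← seg_eq_iff, ← seg_eq_iff, List.length_append, List.length_singleton, seg_succ,
    List.append_singleton_inj]

lemma mem_biUnion_cyl : β ∈ ⋃ s ∈ P, cyl s ↔ ∃ l, seg β l ∈ P := by
  simp only [Set.mem_iUnion₂, exists_prop]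
  constructor
  · rintro ⟨s, hs, hβ⟩
    exact ⟨s.length, (seg_eq_iff.2 hβ).symm ▸ hs⟩
  · rintro ⟨l, hl⟩
    exact ⟨seg β l, hl, mem_cyl_seg β l⟩

lemma isOpen_biUnion_cyl (P : Set (List Bool)) : IsOpen (⋃ s ∈ P, cyl s) :=
  isOpen_biUnion fun s _ => isOpen_cyl s

/-! ### Minimal strings -/

/-- The strings of `P` none of whose proper prefixes is in `P`. Their cylinders are pairwise
disjoint and cover the same set as those of `P`. -/
def minimalStrings (P : Set (List Bool)) : Set (List Bool) :=
  {s ∈ P | ∀ k < s.length, s.take k ∉ P}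

lemma eq_of_mem_minimalStrings (hs : s ∈ minimalStrings P) (ht : t ∈ minimalStrings P)
    (hβs : β ∈ cyl s) (hβt : β ∈ cyl t) : s = t := by
  rw [← seg_eq_iff] at hβs hβt
  have hle {s t} (hs : s ∈ minimalStrings P) (ht : t ∈ minimalStrings P)
      (hβs : seg β s.length = s) (hβt : seg β t.length = t) : t.length ≤ s.length := by
    by_contra! hlt
    refine ht.2 _ hlt ?_
    rw [← hβt, take_seg β hlt.le, hβs]
    exact hs.1
  rw [← hβs, ← hβt, (hle ht hs hβt hβs).antisymm (hle hs ht hβs hβt)]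

lemma exists_seg_mem_minimalStrings (h : ∃ l, seg β l ∈ P) : ∃ n, seg β n ∈ minimalStrings P := by
  classical
  refine ⟨Nat.find h, Nat.find_spec h, fun k hk => ?_⟩
  rw [length_seg] at hk
  rw [take_seg β hk.le]
  exact Nat.find_min h hk

lemma pairwiseDisjoint_minimalStrings (P : Set (List Bool)) :
    (minimalStrings P).PairwiseDisjoint cyl := fun _ hs _ ht hne =>
  Set.disjoint_left.2 fun _ hβs hβt => hne (eq_of_mem_minimalStrings hs ht hβs hβt)

lemma biUnion_minimalStrings (P : Set (List Bool)) :
    ⋃ s ∈ minimalStrings P, cyl s = ⋃ s ∈ P, cyl s := by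
  ext β
  rw [mem_biUnion_cyl, mem_biUnion_cyl]
  exact ⟨fun ⟨l, hl⟩ => ⟨l, hl.1⟩, exists_seg_mem_minimalStrings⟩

lemma measure_biUnion_cyl_le {ν : Measure (ℕ → Bool)} (h : ∀ s ∈ P, μ (cyl s) ≤ ν (cyl s)) :
    μ (⋃ s ∈ P, cyl s) ≤ ν (⋃ s ∈ P, cyl s) := by
  have hsum (ρ : Measure (ℕ → Bool)) :
      ρ (⋃ s ∈ P, cyl s) = ∑' s : minimalStrings P, ρ (cyl s) := by
    rw [← biUnion_minimalStrings]
    exact measure_biUnion (Set.to_countable _) (pairwiseDisjoint_minimalStrings P)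
      fun s _ => measurableSet_cyl s
  rw [hsum, hsum]
  exact ENNReal.tsum_le_tsum fun s => h s s.2.1

/-- The minimal strings whose cylinder is contained in `V`. For open `V` their cylinders
partition `V`. -/
def entryStrings (V : Set (ℕ → Bool)) : Set (List Bool) := minimalStrings {s | cyl s ⊆ V}

lemma cyl_subset_of_mem_entryStrings (ht : t ∈ entryStrings V) : cyl t ⊆ V := ht.1

lemma exists_seg_mem_entryStrings (hV : IsOpen V) (hβ : β ∈ V) : ∃ n, seg β n ∈ entryStrings V :=
  exists_seg_mem_minimalStrings (eventually_cyl_seg_subset hV hβ).exists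

/-! ### Conditional measures -/

lemma cond_le_iff {Ω : Type*} [MeasurableSpace Ω] {ρ : Measure Ω} [IsFiniteMeasure ρ]
    {S T : Set Ω} (hS : MeasurableSet S) {c : ℝ≥0∞} : ρ[T | S] ≤ c ↔ ρ (S ∩ T) ≤ c * ρ S := by
  by_cases h0 : ρ S = 0
  · simp [ProbabilityTheory.cond_eq_zero_of_meas_eq_zero h0, h0,
      measure_mono_null Set.inter_subset_left h0]
  · rw [ProbabilityTheory.cond_apply hS, ENNReal.inv_mul_le_iff h0 (measure_ne_top ρ S), mul_comm]

lemma cond_mono_of_inter_subset {Ω : Type*} [MeasurableSpace Ω] {ρ : Measure Ω} {S T T' : Set Ω}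
    (hS : MeasurableSet S) (h : S ∩ T ⊆ T') : ρ[T | S] ≤ ρ[T' | S] := by
  rw [← ProbabilityTheory.cond_inter_self hS]
  exact measure_mono h

theorem maximal_ineq_cond [IsFiniteMeasure μ] (R : Set (ℕ → Bool)) (δ : ℝ≥0∞) :
    δ * μ (⋃ s ∈ {s | δ ≤ μ[R | cyl s]}, cyl s) ≤ μ R :=
  calc δ * μ (⋃ s ∈ {s | δ ≤ μ[R | cyl s]}, cyl s)
      ≤ μ.restrict R (⋃ s ∈ {s | δ ≤ μ[R | cyl s]}, cyl s) := by
        refine measure_biUnion_cyl_le (μ := δ • μ) fun s hs => ?_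
        rw [Measure.smul_apply, smul_eq_mul, Measure.restrict_apply (measurableSet_cyl s),
          ← ProbabilityTheory.cond_mul_eq_inter (measurableSet_cyl s)]
        exact mul_le_mul_left hs _
    _ ≤ μ R := (measure_mono (Set.subset_univ _)).trans_eq (Measure.restrict_apply_univ R)

/-! ### Density zero -/

/-- Every point outside `C` is a density-zero point of `A`; for `A ⊆ C` this says that the closure
of `A` in the density topology is contained in `C`. -/
def DensityZeroOff (μ : Measure (ℕ → Bool)) (A C : Set (ℕ → Bool)) : Prop :=
  ∀ β ∉ C, Tendsto (fun l => μ[A | cyl (seg β l)]) atTop (𝓝 0)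

lemma DensityZeroOff.union (hA : DensityZeroOff μ A V) (hB : DensityZeroOff μ B V) :
    DensityZeroOff μ (A ∪ B) V := fun β hβ =>
  tendsto_of_tendsto_of_tendsto_of_le_of_le tendsto_const_nhds
    (by simpa using (hA β hβ).add (hB β hβ)) (fun _ => zero_le) fun _ => measure_union_le _ _

-- Exhaust `A` by closed sets `F j`. Near a point outside `A`, hence outside `F j`, only `A \ F j`
-- contributes to the relative measure of `A`, and `U` collects the points where the maximal
-- inequality allows that contribution to exceed `2⁻¹ ^ j`.
theorem exists_isOpen_densityZeroOff_union [IsFiniteMeasure μ] (hA : MeasurableSet A)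
    {ε : ℝ≥0∞} (hε : ε ≠ 0) :
    ∃ U, IsOpen U ∧ μ U ≤ ε ∧ DensityZeroOff μ A (A ∪ U) := by
  obtain ⟨η, hη, hsum⟩ := ENNReal.exists_pos_sum_of_countable' hε ℕ
  have hδ (j : ℕ) : (2⁻¹ : ℝ≥0∞) ^ j ≠ 0 := pow_ne_zero j (by simp)
  have hδ' (j : ℕ) : (2⁻¹ : ℝ≥0∞) ^ j ≠ ∞ := ENNReal.pow_ne_top (by simp)
  choose F hFA hF hFμ using fun j => hA.exists_isClosed_sdiff_lt (measure_ne_top μ A)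
    (mul_ne_zero (hδ j) (hη j).ne')
  let heavy (j : ℕ) : Set (List Bool) := {s | 2⁻¹ ^ j ≤ μ[A \ F j | cyl s]}
  have hheavy (j : ℕ) : μ (⋃ s ∈ heavy j, cyl s) ≤ η j :=
    (ENNReal.mul_le_mul_iff_right (hδ j) (hδ' j)).1
      ((maximal_ineq_cond _ _).trans (hFμ j).le)
  refine ⟨⋃ j, ⋃ s ∈ heavy j, cyl s, isOpen_iUnion fun j => isOpen_biUnion_cyl _,
    (measure_iUnion_le _).trans ((ENNReal.tsum_le_tsum hheavy).trans hsum.le), fun β hβ => ?_⟩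
  rw [Set.mem_union, Set.mem_iUnion, not_or, not_exists] at hβ
  refine ENNReal.tendsto_nhds_zero.2 fun δ hδ => ?_
  obtain ⟨j, hj⟩ := ENNReal.exists_inv_two_pow_lt hδ.ne'
  filter_upwards [eventually_cyl_seg_subset (hF j).isOpen_compl fun h => hβ.1 (hFA j h)] with l hl
  have hlight : μ[A \ F j | cyl (seg β l)] < 2⁻¹ ^ j :=
    not_le.1 fun h => hβ.2 j (mem_biUnion_cyl.2 ⟨l, h⟩)
  have hsub : cyl (seg β l) ∩ A ⊆ A \ F j :=
    Set.subset_inter Set.inter_subset_right (Set.inter_subset_left.trans hl)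
  exact (cond_mono_of_inter_subset (measurableSet_cyl _) hsub).trans (hlight.trans hj).le

/-- The subset of `V` which agrees with `U t` on the cylinder of each entry string `t` of `V`. -/
def patch (V : Set (ℕ → Bool)) (U : List Bool → Set (ℕ → Bool)) : Set (ℕ → Bool) :=
  ⋃ t ∈ entryStrings V, U t ∩ cyl t

lemma patch_subset : patch V U ⊆ V :=
  Set.iUnion₂_subset fun _ ht => Set.inter_subset_right.trans (cyl_subset_of_mem_entryStrings ht)

lemma isOpen_patch (hU : ∀ t, IsOpen (U t)) : IsOpen (patch V U) :=
  isOpen_biUnion fun t _ => (hU t).inter (isOpen_cyl t)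

lemma mem_patch (ht : t ∈ entryStrings V) (hβt : β ∈ cyl t) (hβ : β ∈ U t) :
    β ∈ patch V U :=
  Set.mem_biUnion ht ⟨hβ, hβt⟩

lemma cyl_inter_patch_subset (ht : t ∈ entryStrings V) : cyl t ∩ patch V U ⊆ U t := by
  rintro γ ⟨hγt, hγ⟩
  obtain ⟨t', ht', hγU, hγt'⟩ := Set.mem_iUnion₂.1 hγ
  rwa [eq_of_mem_minimalStrings ht ht' hγt hγt']

lemma cond_patch_le (ht : t ∈ entryStrings V) : μ[patch V U | cyl t] ≤ μ[U t | cyl t] :=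
  cond_mono_of_inter_subset (measurableSet_cyl t) (cyl_inter_patch_subset ht)

-- A point outside `V` is not in the cylinder of any entry string, so within the cylinder of
-- `β↾l` only entry strings of length at least `l` contribute.
lemma cyl_inter_patch_subset_of_notMem (hβ : β ∉ V) (l : ℕ) :
    cyl (seg β l) ∩ patch V U ⊆
      ⋃ t ∈ {t ∈ entryStrings V | l ≤ t.length ∧ cyl t ⊆ cyl (seg β l)}, cyl t := by
  rintro γ ⟨hγl, hγ⟩
  obtain ⟨t, ht, -, hγt⟩ := Set.mem_iUnion₂.1 hγ
  have hγβ : seg γ l = seg β l := by simpa only [length_seg] using seg_eq_iff.2 hγl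
  rw [← seg_eq_iff] at hγt
  have hl : l ≤ t.length := by
    by_contra! hlt
    refine hβ (cyl_subset_of_mem_entryStrings ht ?_)
    rw [← hγt, ← take_seg γ hlt.le, hγβ, take_seg β hlt.le]
    exact mem_cyl_seg β _
  refine Set.mem_biUnion ⟨ht, hl, ?_⟩ (seg_eq_iff.1 hγt)
  rw [← hγt, ← hγβ]
  exact cyl_seg_anti γ hl

theorem densityZeroOff_patch [IsFiniteMeasure μ]
    (hU : ∀ t, μ[U t | cyl t] ≤ 4⁻¹ ^ (t.length + 1)) : DensityZeroOff μ (patch V U) V := by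
  intro β hβ
  have hle (l : ℕ) : μ[patch V U | cyl (seg β l)] ≤ 4⁻¹ ^ (l + 1) := by
    set T := {t ∈ entryStrings V | l ≤ t.length ∧ cyl t ⊆ cyl (seg β l)}
    have hT : ∀ t ∈ T, μ.restrict (patch V U) (cyl t) ≤ ((4⁻¹ : ℝ≥0∞) ^ (l + 1) • μ) (cyl t) := by
      rintro t ⟨ht, hlt, -⟩
      rw [Measure.restrict_apply (measurableSet_cyl t), Measure.smul_apply, smul_eq_mul,
        ← cond_le_iff (measurableSet_cyl t)]
      exact (cond_patch_le ht).trans ((hU t).trans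
        (pow_le_pow_right_of_le_one' (by simp [ENNReal.inv_le_one]) (by lia)))
    rw [cond_le_iff (measurableSet_cyl _)]
    calc μ (cyl (seg β l) ∩ patch V U)
        ≤ μ ((⋃ t ∈ T, cyl t) ∩ patch V U) := measure_mono (Set.subset_inter
          (cyl_inter_patch_subset_of_notMem hβ l) Set.inter_subset_right)
      _ = μ.restrict (patch V U) (⋃ t ∈ T, cyl t) :=
        (Measure.restrict_apply (isOpen_biUnion_cyl T).measurableSet).symm
      _ ≤ 4⁻¹ ^ (l + 1) * μ (⋃ t ∈ T, cyl t) := measure_biUnion_cyl_le hT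
      _ ≤ 4⁻¹ ^ (l + 1) * μ (cyl (seg β l)) :=
        mul_le_mul_right (measure_mono (Set.iUnion₂_subset fun t ht => ht.2.2)) _
  refine tendsto_of_tendsto_of_tendsto_of_le_of_le tendsto_const_nhds ?_ (fun _ => zero_le) hle
  exact (ENNReal.tendsto_pow_atTop_nhds_zero_of_lt_one (by simp)).comp (tendsto_add_atTop_nat 1)

/-- The Lusin–Menchoff relation: `A ⊆ B` are open, and `B` contains the closure of `A` in the
density topology. -/
structure StronglyInside (μ : Measure (ℕ → Bool)) (A B : Set (ℕ → Bool)) : Prop where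
  isOpen_inner : IsOpen A
  isOpen_outer : IsOpen B
  subset : A ⊆ B
  densityZeroOff : DensityZeroOff μ A B

lemma cond_le_of_measure_le [IsFiniteMeasure μ] {W : Set (ℕ → Bool)} {c : ℝ≥0∞}
    (h : μ W ≤ c * μ (cyl t)) : μ[W | cyl t] ≤ c :=
  (cond_le_iff (measurableSet_cyl t)).2 ((measure_mono Set.inter_subset_right).trans h)

lemma inv_four_pow_mul_measure_cyl_ne_zero [μ.IsOpenPosMeasure] (t : List Bool) :
    4⁻¹ ^ (t.length + 1) * μ (cyl t) ≠ 0 :=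
  mul_ne_zero (pow_ne_zero _ (by simp)) ((isOpen_cyl t).measure_ne_zero μ (nonempty_cyl t))

-- Thicken `A` inside the cylinder of each entry string `t` of `B` by an open set so thin, relative
-- to `t`, that the union of these sets has density zero off `B`.
theorem StronglyInside.exists_between [IsFiniteMeasure μ] [μ.IsOpenPosMeasure]
    (h : StronglyInside μ A B) : ∃ C, StronglyInside μ A C ∧ StronglyInside μ C B := by
  choose U hUo hUμ hUA using fun t => exists_isOpen_densityZeroOff_union (μ := μ)
    h.isOpen_inner.measurableSet (inv_four_pow_mul_measure_cyl_ne_zero (μ := μ) t)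
  have hC : IsOpen (A ∪ patch B U) := h.isOpen_inner.union (isOpen_patch hUo)
  refine ⟨A ∪ patch B U, ⟨h.isOpen_inner, hC, Set.subset_union_left, fun β hβ => ?_⟩,
    ⟨hC, h.isOpen_outer, Set.union_subset h.subset patch_subset, h.densityZeroOff.union
      (densityZeroOff_patch fun t => cond_le_of_measure_le (hUμ t))⟩⟩
  by_cases hβB : β ∈ B
  · obtain ⟨n, hn⟩ := exists_seg_mem_entryStrings h.isOpen_outer hβB
    refine hUA (seg β n) β fun hβU => hβ (hβU.imp_right ?_)
    exact mem_patch hn (mem_cyl_seg β n)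
  · exact h.densityZeroOff β hβB

theorem exists_stronglyInside_of_null [IsFiniteMeasure μ] [μ.IsOpenPosMeasure] (hG : μ G = 0)
    (hV : IsOpen V) (hGV : G ⊆ V) (hO : IsOpen O) (hGO : G ⊆ O) :
    ∃ W, G ⊆ W ∧ W ⊆ O ∧ StronglyInside μ W V ∧ ∀ t ∈ entryStrings V, μ[W | cyl t] ≤ 4⁻¹ := by
  choose U hGU hUo hUμ using fun t => G.exists_isOpen_lt_of_lt _
    (hG.trans_lt (inv_four_pow_mul_measure_cyl_ne_zero (μ := μ) t).bot_lt)
  have hU (t : List Bool) : μ[O ∩ U t | cyl t] ≤ 4⁻¹ ^ (t.length + 1) :=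
    cond_le_of_measure_le ((measure_mono Set.inter_subset_right).trans (hUμ t).le)
  refine ⟨patch V fun t => O ∩ U t, fun β hβ => ?_, ?_,
    ⟨isOpen_patch fun t => hO.inter (hUo t), hV, patch_subset, densityZeroOff_patch hU⟩,
    fun t ht => ?_⟩
  · obtain ⟨n, hn⟩ := exists_seg_mem_entryStrings hV (hGV hβ)
    exact mem_patch hn (mem_cyl_seg β n) ⟨hGO hβ, hGU _ hβ⟩
  · exact Set.iUnion₂_subset fun t _ => Set.inter_subset_left.trans Set.inter_subset_left
  · exact ((cond_patch_le ht).trans (hU t)).trans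
      ((pow_le_pow_right_of_le_one' (by simp [ENNReal.inv_le_one]) (Nat.succ_pos _)).trans_eq
        (pow_one _))

theorem exists_stronglyInside_seq [IsFiniteMeasure μ] [μ.IsOpenPosMeasure] (hG : IsGδ G)
    (hG0 : μ G = 0) :
    ∃ V : ℕ → Set (ℕ → Bool), ⋂ k, V k = G ∧ (∀ k, StronglyInside μ (V (k + 1)) (V k)) ∧
      ∀ k, ∀ t ∈ entryStrings (V k), μ[V (k + 1) | cyl t] ≤ 4⁻¹ := by
  obtain ⟨O, hO, rfl⟩ := hG.eq_iInter_nat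
  have hnext (k : ℕ) (V : Set (ℕ → Bool)) (hV : IsOpen V) (hGV : ⋂ k, O k ⊆ V) :=
    exists_stronglyInside_of_null hG0 hV hGV (hO k) (Set.iInter_subset O k)
  choose! next hG_next hnext_O hnext_inside hnext_le using hnext
  let V (k : ℕ) : Set (ℕ → Bool) := Nat.rec Set.univ next k
  have hV (k : ℕ) : IsOpen (V k) ∧ ⋂ k, O k ⊆ V k := by
    induction k with
    | zero => exact ⟨isOpen_univ, Set.subset_univ _⟩
    | succ k ih => exact ⟨(hnext_inside k _ ih.1 ih.2).isOpen_inner, hG_next k _ ih.1 ih.2⟩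
  refine ⟨V, (Set.subset_iInter fun k => ?_).antisymm (Set.subset_iInter fun k => (hV k).2),
    fun k => hnext_inside k _ (hV k).1 (hV k).2, fun k => hnext_le k _ (hV k).1 (hV k).2⟩
  exact (Set.iInter_subset V (k + 1)).trans (hnext_O k _ (hV k).1 (hV k).2)

/-! ### Fair functions and densities -/

/-- The functions satisfying the averaging identity of a martingale, with no bound required. -/
def fairSubmodule : Submodule ℝ (List Bool → ℝ) where
  carrier := {f | ∀ s, f s = (f (s ++ [false]) + f (s ++ [true])) / 2}
  zero_mem' s := by simp
  add_mem' {f g} hf hg s := by simp only [Pi.add_apply, hf s, hg s]; ring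
  smul_mem' c f hf s := by simp only [Pi.smul_apply, smul_eq_mul, hf s]; ring

lemma isClosed_fairSubmodule : IsClosed (fairSubmodule : Set (List Bool → ℝ)) := by
  change IsClosed {f : List Bool → ℝ | ∀ s, f s = (f (s ++ [false]) + f (s ++ [true])) / 2}
  simp only [Set.ofPred_forall]
  exact isClosed_iInter fun s => isClosed_eq (by fun_prop) (by fun_prop)

lemma mem_fairSubmodule_of_tendsto {F : ℕ → List Bool → ℝ} {f : List Bool → ℝ}
    (hF : ∀ n, F n ∈ fairSubmodule) (h : ∀ s, Tendsto (fun n => F n s) atTop (𝓝 (f s))) :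
    f ∈ fairSubmodule :=
  isClosed_fairSubmodule.mem_of_tendsto (tendsto_pi_nhds.2 h) (Eventually.of_forall hF)

lemma cyl_sdiff_append_true (s : List Bool) : cyl s \ cyl (s ++ [true]) = cyl (s ++ [false]) := by
  ext β
  simp only [Set.mem_sdiff, mem_cyl_append_singleton, not_and, Bool.not_eq_true]
  tauto

/-- `μ` is the coin-flipping measure on Cantor space. -/
class IsCoinFlipping (μ : Measure (ℕ → Bool)) : Prop where
  measure_cyl (s : List Bool) : μ (cyl s) = (1 / 2) ^ s.length

instance [IsCoinFlipping μ] : IsProbabilityMeasure μ where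
  measure_univ := by simpa [cyl] using IsCoinFlipping.measure_cyl (μ := μ) []

instance [IsCoinFlipping μ] : μ.IsOpenPosMeasure where
  open_pos V hV hne := by
    obtain ⟨β, hβ⟩ := hne
    obtain ⟨l, hl⟩ := (eventually_cyl_seg_subset hV hβ).exists
    refine fun h0 => absurd (measure_mono_null hl h0) ?_
    simp [IsCoinFlipping.measure_cyl]

/-- The relative measure `μ(A ∩ N_s) / μ(N_s)`. For the coin-flipping measure it is a
martingale in `s`. -/
noncomputable def density (μ : Measure (ℕ → Bool)) (A : Set (ℕ → Bool)) (s : List Bool) : ℝ :=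
  (μ[|cyl s]).real A

lemma density_eq_two_pow_mul [IsCoinFlipping μ] (A : Set (ℕ → Bool)) (s : List Bool) :
    density μ A s = 2 ^ s.length * μ.real (cyl s ∩ A) := by
  rw [density, measureReal_def, ProbabilityTheory.cond_apply (measurableSet_cyl s),
    IsCoinFlipping.measure_cyl, ENNReal.toReal_mul, ← measureReal_def]
  simp

lemma density_nonneg (μ : Measure (ℕ → Bool)) (A : Set (ℕ → Bool)) (s : List Bool) :
    0 ≤ density μ A s := measureReal_nonneg

lemma density_le_one (μ : Measure (ℕ → Bool)) (A : Set (ℕ → Bool)) (s : List Bool) :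
    density μ A s ≤ 1 := measureReal_le_one

lemma density_mono (h : A ⊆ B) (s : List Bool) : density μ A s ≤ density μ B s :=
  measureReal_mono h

lemma density_eq_one [IsFiniteMeasure μ] [μ.IsOpenPosMeasure] (h : cyl s ⊆ A) :
    density μ A s = 1 := by
  have hs : μ (cyl s) ≠ 0 := (isOpen_cyl s).measure_ne_zero μ (nonempty_cyl s)
  refine le_antisymm (density_le_one μ A s) ((density_mono h s).trans' ?_)
  rw [density, measureReal_def, ProbabilityTheory.cond_apply_self hs (measure_ne_top μ _),
    ENNReal.toReal_one]

lemma density_mem_fairSubmodule [IsCoinFlipping μ] (A : Set (ℕ → Bool)) :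
    density μ A ∈ fairSubmodule := by
  intro s
  have htrue : cyl (s ++ [true]) ⊆ cyl s := fun β hβ => (mem_cyl_append_singleton.1 hβ).1
  have hsplit : μ.real (cyl s ∩ A) =
      μ.real (cyl (s ++ [true]) ∩ A) + μ.real (cyl (s ++ [false]) ∩ A) := by
    rw [← measureReal_inter_add_sdiff (s := cyl s ∩ A) (measurableSet_cyl (s ++ [true])),
      Set.inter_right_comm, Set.inter_eq_right.2 htrue, Set.inter_sdiff_right_comm,
      cyl_sdiff_append_true]
  simp only [density_eq_two_pow_mul, hsplit, List.length_append, List.length_singleton]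
  ring

lemma eventually_density_eq_one [IsFiniteMeasure μ] [μ.IsOpenPosMeasure] (hA : IsOpen A)
    (hβ : β ∈ A) : ∀ᶠ l in atTop, density μ A (seg β l) = 1 :=
  (eventually_cyl_seg_subset hA hβ).mono fun _ => density_eq_one

lemma DensityZeroOff.tendsto_density (h : DensityZeroOff μ A B) (hβ : β ∉ B) :
    Tendsto (fun l => density μ A (seg β l)) atTop (𝓝 0) :=
  (ENNReal.tendsto_toReal ENNReal.zero_ne_top).comp (h β hβ)

lemma density_le_of_cond_le {c : ℝ≥0∞} (hc : c ≠ ∞) (h : μ[A | cyl s] ≤ c) :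
    density μ A s ≤ c.toReal := ENNReal.toReal_mono hc h

lemma cauchySeq_of_forall_exists_dist_le {α : Type*} [PseudoMetricSpace α] {u : ℕ → α}
    (h : ∀ ε > 0, ∃ v : ℕ → α, CauchySeq v ∧ ∀ l, dist (u l) (v l) ≤ ε) : CauchySeq u := by
  refine Metric.cauchySeq_iff.2 fun ε hε => ?_
  obtain ⟨v, hv, hle⟩ := h (ε / 3) (by positivity)
  obtain ⟨N, hN⟩ := Metric.cauchySeq_iff.1 hv (ε / 3) (by positivity)
  refine ⟨N, fun m hm n hn => ?_⟩
  calc dist (u m) (u n) ≤ dist (u m) (v m) + dist (v m) (v n) + dist (v n) (u n) :=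
        dist_triangle4 _ _ _ _
    _ < ε := by
        have := dist_comm (v n) (u n)
        linarith [hle m, hle n, hN m hm n hn]

/-! ### Urysohn functions between strongly nested open sets -/

/-- A pair of open sets in the relation `StronglyInside`, between which an infinite family of open
sets is interpolated as in the proof of Urysohn's lemma. -/
structure NestedPair (μ : Measure (ℕ → Bool)) where
  inner : Set (ℕ → Bool)
  outer : Set (ℕ → Bool)
  stronglyInside : StronglyInside μ inner outer

namespace NestedPair

variable [IsFiniteMeasure μ] [μ.IsOpenPosMeasure] {N : NestedPair μ}

/-- An open set interpolated between the members of the pair. -/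
noncomputable def middle (N : NestedPair μ) : Set (ℕ → Bool) :=
  N.stronglyInside.exists_between.choose

/-- The pair formed by the inner set and the interpolated set. -/
noncomputable def lower (N : NestedPair μ) : NestedPair μ where
  inner := N.inner
  outer := N.middle
  stronglyInside := N.stronglyInside.exists_between.choose_spec.1

/-- The pair formed by the interpolated set and the outer set. -/
noncomputable def upper (N : NestedPair μ) : NestedPair μ where
  inner := N.middle
  outer := N.outer
  stronglyInside := N.stronglyInside.exists_between.choose_spec.2

/-- The average of the densities of the inner sets of `2 ^ n` pairs, obtained by replacing `n` times
each pair `N` by `N.lower` and `N.upper.upper`. The skipped pair `N.upper.lower` separates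
the two halves: along every point the lower half tends to `0` or the upper half tends to `1`. -/
noncomputable def approx : ℕ → NestedPair μ → List Bool → ℝ
  | 0, N, s => density μ N.inner s
  | n + 1, N, s => (approx n N.lower s + approx n N.upper.upper s) / 2

lemma approx_mem_fairSubmodule [IsCoinFlipping μ] (n : ℕ) (N : NestedPair μ) :
    approx n N ∈ fairSubmodule := by
  induction n generalizing N with
  | zero => exact density_mem_fairSubmodule _
  | succ n ih =>
    have : approx (n + 1) N = (2⁻¹ : ℝ) • (approx n N.lower + approx n N.upper.upper) := by
      ext s
      simp [approx, div_eq_inv_mul]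
    exact this ▸ fairSubmodule.smul_mem _ (fairSubmodule.add_mem (ih _) (ih _))

lemma density_inner_le_approx (n : ℕ) (N : NestedPair μ) (s : List Bool) :
    density μ N.inner s ≤ approx n N s := by
  induction n generalizing N with
  | zero => exact le_rfl
  | succ n ih =>
    have hsub : N.inner ⊆ N.upper.middle :=
      N.lower.stronglyInside.subset.trans N.upper.lower.stronglyInside.subset
    have hl : density μ N.inner s ≤ approx n N.lower s := ih N.lower
    have hr : density μ N.inner s ≤ approx n N.upper.upper s :=
      (density_mono hsub s).trans (ih N.upper.upper)
    rw [approx]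
    linarith

lemma approx_le_density_outer (n : ℕ) (N : NestedPair μ) (s : List Bool) :
    approx n N s ≤ density μ N.outer s := by
  induction n generalizing N with
  | zero => exact density_mono N.stronglyInside.subset s
  | succ n ih =>
    have hl : approx n N.lower s ≤ density μ N.outer s :=
      (ih N.lower).trans (density_mono N.upper.stronglyInside.subset s)
    have hr : approx n N.upper.upper s ≤ density μ N.outer s := ih N.upper.upper
    rw [approx]
    linarith

lemma approx_le_approx_succ (n : ℕ) (N : NestedPair μ) (s : List Bool) :
    approx n N s ≤ approx (n + 1) N s := by
  induction n generalizing N with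
  | zero => exact density_inner_le_approx 1 N s
  | succ n ih => exact div_le_div_of_nonneg_right (add_le_add (ih _) (ih _)) zero_le_two

/-- The analogue of the function of Urysohn's lemma: the limit of the averages `approx n N`. -/
noncomputable def urysohn (N : NestedPair μ) (s : List Bool) : ℝ := ⨆ n, approx n N s

lemma tendsto_approx (N : NestedPair μ) (s : List Bool) :
    Tendsto (fun n => approx n N s) atTop (𝓝 (N.urysohn s)) :=
  tendsto_atTop_ciSup (monotone_nat_of_le_succ fun n => approx_le_approx_succ n N s)
    ⟨density μ N.outer s, Set.forall_mem_range.2 fun n => approx_le_density_outer n N s⟩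

lemma urysohn_mem_fairSubmodule [IsCoinFlipping μ] (N : NestedPair μ) : N.urysohn ∈ fairSubmodule :=
  mem_fairSubmodule_of_tendsto (approx_mem_fairSubmodule · N) N.tendsto_approx

lemma density_inner_le_urysohn (N : NestedPair μ) (s : List Bool) :
    density μ N.inner s ≤ N.urysohn s :=
  ge_of_tendsto' (N.tendsto_approx s) fun n => density_inner_le_approx n N s

lemma urysohn_le_density_outer (N : NestedPair μ) (s : List Bool) :
    N.urysohn s ≤ density μ N.outer s :=
  le_of_tendsto' (N.tendsto_approx s) fun n => approx_le_density_outer n N s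

lemma urysohn_nonneg (N : NestedPair μ) (s : List Bool) : 0 ≤ N.urysohn s :=
  (density_nonneg μ _ s).trans (N.density_inner_le_urysohn s)

lemma urysohn_le_one (N : NestedPair μ) (s : List Bool) : N.urysohn s ≤ 1 :=
  (N.urysohn_le_density_outer s).trans (density_le_one μ _ s)

lemma urysohn_eq_average (N : NestedPair μ) (s : List Bool) :
    N.urysohn s = (N.lower.urysohn s + N.upper.upper.urysohn s) / 2 :=
  tendsto_nhds_unique ((tendsto_add_atTop_iff_nat 1).2 (N.tendsto_approx s))
    (((N.lower.tendsto_approx s).add (N.upper.upper.tendsto_approx s)).div_const 2)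

lemma tendsto_urysohn_of_mem_inner (hβ : β ∈ N.inner) :
    Tendsto (fun l => N.urysohn (seg β l)) atTop (𝓝 1) := by
  refine tendsto_const_nhds.congr' ?_
  filter_upwards [eventually_density_eq_one (μ := μ) N.stronglyInside.isOpen_inner hβ] with l hl
  exact le_antisymm (hl ▸ N.density_inner_le_urysohn _) (N.urysohn_le_one _)

lemma tendsto_urysohn_lower_of_notMem (hβ : β ∉ N.upper.middle) :
    Tendsto (fun l => N.lower.urysohn (seg β l)) atTop (𝓝 0) := by
  have hgap : StronglyInside μ N.middle N.upper.middle := N.upper.lower.stronglyInside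
  exact tendsto_of_tendsto_of_tendsto_of_le_of_le tendsto_const_nhds
    (hgap.densityZeroOff.tendsto_density hβ) (fun _ => N.lower.urysohn_nonneg _)
    fun _ => N.lower.urysohn_le_density_outer _

-- One of the two halves of `N.urysohn` converges along `β`, so the error is halved at each step.
lemma exists_tendsto_abs_sub_le (N : NestedPair μ) (β : ℕ → Bool) (n : ℕ) :
    ∃ (u : ℕ → ℝ) (a : ℝ), Tendsto u atTop (𝓝 a) ∧
      ∀ l, |N.urysohn (seg β l) - u l| ≤ (1 / 2) ^ n := by
  induction n generalizing N with
  | zero =>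
    refine ⟨fun _ => 0, 0, tendsto_const_nhds, fun l => ?_⟩
    rw [sub_zero, abs_of_nonneg (N.urysohn_nonneg _), pow_zero]
    exact N.urysohn_le_one _
  | succ n ih =>
    by_cases hβ : β ∈ N.upper.middle
    · obtain ⟨u, a, hu, hle⟩ := ih N.lower
      refine ⟨fun l => (u l + N.upper.upper.urysohn (seg β l)) / 2, _,
        (hu.add (tendsto_urysohn_of_mem_inner (N := N.upper.upper) hβ)).div_const 2, fun l => ?_⟩
      rw [N.urysohn_eq_average, ← sub_div, add_sub_add_right_eq_sub, abs_div, abs_two, pow_succ,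
        mul_one_div]
      exact div_le_div_of_nonneg_right (hle l) zero_le_two
    · obtain ⟨u, a, hu, hle⟩ := ih N.upper.upper
      refine ⟨fun l => (N.lower.urysohn (seg β l) + u l) / 2, _,
        ((tendsto_urysohn_lower_of_notMem hβ).add hu).div_const 2, fun l => ?_⟩
      rw [N.urysohn_eq_average, ← sub_div, add_sub_add_left_eq_sub, abs_div, abs_two, pow_succ,
        mul_one_div]
      exact div_le_div_of_nonneg_right (hle l) zero_le_two

theorem cauchySeq_urysohn (N : NestedPair μ) (β : ℕ → Bool) :
    CauchySeq fun l => N.urysohn (seg β l) := by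
  refine cauchySeq_of_forall_exists_dist_le fun ε hε => ?_
  obtain ⟨n, hn⟩ := exists_pow_lt_of_lt_one hε (one_half_lt_one (α := ℝ))
  obtain ⟨u, a, hu, hle⟩ := N.exists_tendsto_abs_sub_le β n
  exact ⟨u, hu.cauchySeq, fun l => (hle l).trans hn.le⟩

end NestedPair

/-! ### Alternating sums of layers -/

theorem exists_mem_Icc_alternating_sum {h : ℕ → List Bool → ℝ} (hfair : ∀ i, h i ∈ fairSubmodule)
    (hanti : ∀ s, Antitone fun i => h i s) (hzero : ∀ s, Tendsto (fun i => h i s) atTop (𝓝 0)) :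
    ∃ f ∈ fairSubmodule, ∀ k s, f s ∈ Set.Icc (∑ i ∈ Finset.range (2 * k), (-1) ^ i * h i s)
      (∑ i ∈ Finset.range (2 * k + 1), (-1) ^ i * h i s) := by
  choose f hf using fun s => (hanti s).tendsto_alternating_series_of_tendsto_zero (hzero s)
  refine ⟨f, mem_fairSubmodule_of_tendsto (fun n => ?_) hf, fun k s =>
    ⟨(hanti s).alternating_series_le_tendsto (hf s) k,
      (hanti s).tendsto_le_alternating_series (hf s) k⟩⟩
  have hsum : ∑ i ∈ Finset.range n, (-1 : ℝ) ^ i • h i ∈ fairSubmodule :=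
    fairSubmodule.sum_mem fun i _ => fairSubmodule.smul_mem _ (hfair i)
  simpa only [Finset.sum_fn, Pi.smul_apply, smul_eq_mul] using hsum

lemma sum_range_alternating_of_eq_one {a : ℕ → ℝ} (h : ∀ i ≤ m, a i = 1) :
    ∑ i ∈ Finset.range (m + 2), (-1) ^ i * a i = if Even m then 1 - a (m + 1) else a (m + 1) := by
  have hone : ∑ i ∈ Finset.range (m + 1), (-1) ^ i * a i = ∑ i ∈ Finset.range (m + 1), (-1) ^ i :=
    Finset.sum_congr rfl fun i hi => by rw [h i (Finset.mem_range_succ_iff.1 hi), mul_one]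
  rw [Finset.sum_range_succ, hone, neg_one_geom_sum]
  rcases Nat.even_or_odd m with hm | hm
  · simp [hm, hm.add_one, hm.add_one.neg_one_pow, sub_eq_add_neg]
  · simp [Nat.not_even_iff_odd.2 hm, hm.add_one, hm.add_one.neg_one_pow]

lemma tendsto_density_of_measure_iInter_eq_zero {V : ℕ → Set (ℕ → Bool)} (hV : ∀ k, IsOpen (V k))
    (hanti : Antitone V) (h0 : μ (⋂ k, V k) = 0) (s : List Bool) :
    Tendsto (fun k => density μ (V k) s) atTop (𝓝 0) := by
  have h := tendsto_measure_iInter_atTop (μ := μ[|cyl s])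
    (fun k => (hV k).measurableSet.nullMeasurableSet) hanti ⟨0, measure_ne_top _ _⟩
  rw [ProbabilityTheory.cond_absolutelyContinuous h0] at h
  exact (ENNReal.tendsto_toReal ENNReal.zero_ne_top).comp h

lemma antitone_of_stronglyInside {V : ℕ → Set (ℕ → Bool)}
    (hV : ∀ k, StronglyInside μ (V (k + 1)) (V k)) : Antitone V :=
  antitone_nat_of_succ_le fun k => (hV k).subset

section Layer

variable {V : ℕ → Set (ℕ → Bool)} [IsFiniteMeasure μ] [μ.IsOpenPosMeasure]
  (hV : ∀ k, StronglyInside μ (V (k + 1)) (V k))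

/-- The Urysohn functions between every other consecutive pair of a strongly nested sequence `V`.
Thanks to the skipped pairs, the later layers tend to `0` along every point outside `⋂ k, V k`. -/
noncomputable def layer (i : ℕ) : List Bool → ℝ :=
  NestedPair.urysohn ⟨_, _, hV (2 * i)⟩

lemma density_le_layer (i : ℕ) (s : List Bool) : density μ (V (2 * i + 1)) s ≤ layer hV i s :=
  NestedPair.density_inner_le_urysohn ⟨_, _, hV (2 * i)⟩ s

lemma layer_le_density (i : ℕ) (s : List Bool) : layer hV i s ≤ density μ (V (2 * i)) s :=
  NestedPair.urysohn_le_density_outer ⟨_, _, hV (2 * i)⟩ s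

lemma antitone_layer (s : List Bool) : Antitone fun i => layer hV i s :=
  antitone_nat_of_succ_le fun i => ((layer_le_density hV (i + 1) s).trans
    (density_mono (hV (2 * i + 1)).subset s)).trans (density_le_layer hV i s)

lemma layer_nonneg (i : ℕ) (s : List Bool) : 0 ≤ layer hV i s := NestedPair.urysohn_nonneg _ s

lemma layer_le_one (i : ℕ) (s : List Bool) : layer hV i s ≤ 1 := NestedPair.urysohn_le_one _ s

lemma layer_eq_one (hs : cyl s ⊆ V (2 * m + 1)) {i : ℕ} (hi : i ≤ m) : layer hV i s = 1 := by
  refine le_antisymm (layer_le_one hV i s) (le_trans ?_ (antitone_layer hV s hi))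
  exact (density_eq_one hs).ge.trans (density_le_layer hV m s)

lemma tendsto_layer_zero (h0 : μ (⋂ k, V k) = 0) (s : List Bool) :
    Tendsto (fun i => layer hV i s) atTop (𝓝 0) :=
  tendsto_of_tendsto_of_tendsto_of_le_of_le tendsto_const_nhds
    ((tendsto_density_of_measure_iInter_eq_zero (fun k => (hV k).isOpen_outer)
      (antitone_of_stronglyInside hV) h0 s).comp (tendsto_id.const_mul_atTop' two_pos))
    (fun i => layer_nonneg hV i s) fun i => layer_le_density hV i s

lemma tendsto_layer_seg_zero (hβ : β ∉ V k) {i : ℕ} (hi : k < 2 * i) :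
    Tendsto (fun l => layer hV i (seg β l)) atTop (𝓝 0) :=
  tendsto_of_tendsto_of_tendsto_of_le_of_le tendsto_const_nhds
    ((hV k).densityZeroOff.tendsto_density hβ) (fun _ => layer_nonneg hV i _) fun _ =>
    (layer_le_density hV i _).trans (density_mono (antitone_of_stronglyInside hV hi) _)

lemma exists_tendsto_layer (β : ℕ → Bool) (i : ℕ) :
    ∃ a, Tendsto (fun l => layer hV i (seg β l)) atTop (𝓝 a) :=
  cauchySeq_tendsto_of_complete (NestedPair.cauchySeq_urysohn _ β)

lemma exists_seg_layer_transition
    (hent : ∀ k, ∀ t ∈ entryStrings (V k), μ[V (k + 1) | cyl t] ≤ 4⁻¹)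
    (hβ : β ∈ ⋂ k, V k) (m : ℕ) :
    ∃ l, (∀ i ≤ m, layer hV i (seg β l) = 1) ∧ layer hV (m + 1) (seg β l) ≤ 1 / 4 := by
  obtain ⟨l, hl⟩ := exists_seg_mem_entryStrings (hV (2 * m + 1)).isOpen_outer
    (Set.mem_iInter.1 hβ (2 * m + 1))
  refine ⟨l, fun i => layer_eq_one hV (cyl_subset_of_mem_entryStrings hl),
    (layer_le_density hV (m + 1) _).trans ?_⟩
  exact (density_le_of_cond_le (by simp) (hent _ _ hl)).trans_eq (by simp)

-- Infinitely many transitions happen at distinct lengths because the layers tend to zero at each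
-- of the finitely many initial segments shorter than `N`.
lemma eventually_exists_seg_layer_transition (h0 : μ (⋂ k, V k) = 0)
    (hent : ∀ k, ∀ t ∈ entryStrings (V k), μ[V (k + 1) | cyl t] ≤ 4⁻¹)
    (hβ : β ∈ ⋂ k, V k) (N : ℕ) :
    ∀ᶠ m in atTop, ∃ l ≥ N, (∀ i ≤ m, layer hV i (seg β l) = 1) ∧
      layer hV (m + 1) (seg β l) ≤ 1 / 4 := by
  have hshort : ∀ᶠ m in atTop, ∀ l ∈ Finset.range N, layer hV m (seg β l) < 1 :=
    (Finset.eventually_all _).2 fun l _ =>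
      (tendsto_layer_zero hV h0 (seg β l)).eventually_lt_const one_pos
  filter_upwards [hshort] with m hm
  obtain ⟨l, hl, hl'⟩ := exists_seg_layer_transition hV hent hβ m
  refine ⟨l, ?_, hl, hl'⟩
  by_contra! hlt
  exact (hm l (Finset.mem_range.2 hlt)).ne (hl m le_rfl)

variable {f : List Bool → ℝ}

lemma cauchySeq_of_mem_Icc_alternating_sum
    (hf : ∀ k s, f s ∈ Set.Icc (∑ i ∈ Finset.range (2 * k), (-1) ^ i * layer hV i s)
      (∑ i ∈ Finset.range (2 * k + 1), (-1) ^ i * layer hV i s)) (hβ : β ∉ ⋂ k, V k) :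
    CauchySeq fun l => f (seg β l) := by
  obtain ⟨k, hk⟩ : ∃ k, β ∉ V k := by simpa using hβ
  choose a ha using exists_tendsto_layer hV β
  have hlower := tendsto_finsetSum (Finset.range (2 * (k + 1)))
    fun i _ => (ha i).const_mul ((-1) ^ i)
  have hupper := hlower.add (tendsto_layer_seg_zero hV hk (i := 2 * (k + 1)) (by lia))
  rw [add_zero] at hupper
  refine (tendsto_of_tendsto_of_tendsto_of_le_of_le hlower hupper
    (fun l => (hf (k + 1) _).1) fun l => (hf (k + 1) _).2.trans_eq ?_).cauchySeq
  rw [Finset.sum_range_succ, (even_two_mul (k + 1)).neg_one_pow, one_mul]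

lemma frequently_ge_of_alternating_sum_le (h0 : μ (⋂ k, V k) = 0)
    (hent : ∀ k, ∀ t ∈ entryStrings (V k), μ[V (k + 1) | cyl t] ≤ 4⁻¹) (hβ : β ∈ ⋂ k, V k)
    (hf : ∀ k s, ∑ i ∈ Finset.range (2 * k), (-1) ^ i * layer hV i s ≤ f s) :
    ∃ᶠ l in atTop, 3 / 4 ≤ f (seg β l) := by
  refine frequently_atTop.2 fun N => ?_
  obtain ⟨M, hM⟩ := eventually_atTop.1 (eventually_exists_seg_layer_transition hV h0 hent hβ N)
  obtain ⟨l, hl, hone, hlast⟩ := hM (2 * M) (by lia)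
  refine ⟨l, hl, le_trans ?_ (hf (M + 1) _)⟩
  rw [mul_add_one, sum_range_alternating_of_eq_one hone, if_pos (even_two_mul M)]
  linarith

lemma frequently_le_of_le_alternating_sum (h0 : μ (⋂ k, V k) = 0)
    (hent : ∀ k, ∀ t ∈ entryStrings (V k), μ[V (k + 1) | cyl t] ≤ 4⁻¹) (hβ : β ∈ ⋂ k, V k)
    (hf : ∀ k s, f s ≤ ∑ i ∈ Finset.range (2 * k + 1), (-1) ^ i * layer hV i s) :
    ∃ᶠ l in atTop, f (seg β l) ≤ 1 / 4 := by
  refine frequently_atTop.2 fun N => ?_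
  obtain ⟨M, hM⟩ := eventually_atTop.1 (eventually_exists_seg_layer_transition hV h0 hent hβ N)
  obtain ⟨l, hl, hone, hlast⟩ := hM (2 * M + 1) (by lia)
  refine ⟨l, hl, (hf (M + 1) _).trans ?_⟩
  rwa [mul_add_one, add_right_comm, sum_range_alternating_of_eq_one hone,
    if_neg (Nat.not_even_two_mul_add_one M)]

end Layer

/-- `f` is a martingale diverging exactly on `G`, with a uniform amount of oscillation there. -/
structure OscillatesExactlyOn (f : List Bool → ℝ) (G : Set (ℕ → Bool)) : Prop where
  isMartingale : IsMartingale f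
  cauchySeq : ∀ β ∉ G, CauchySeq fun l => f (seg β l)
  frequently_ge : ∀ β ∈ G, ∃ᶠ l in atTop, 3 / 4 ≤ f (seg β l)
  frequently_le : ∀ β ∈ G, ∃ᶠ l in atTop, f (seg β l) ≤ 1 / 4

theorem exists_oscillatesExactlyOn [IsCoinFlipping μ] (hG : IsGδ G) (h0 : μ G = 0) :
    ∃ f, OscillatesExactlyOn f G := by
  obtain ⟨V, rfl, hV, hent⟩ := exists_stronglyInside_seq hG h0
  obtain ⟨f, hfair, hf⟩ := exists_mem_Icc_alternating_sum (h := layer hV)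
    (fun i => NestedPair.urysohn_mem_fairSubmodule _) (antitone_layer hV) (tendsto_layer_zero hV h0)
  have hnonneg (s : List Bool) : 0 ≤ f s := by simpa using (hf 0 s).1
  have hle_one (s : List Bool) : f s ≤ 1 :=
    (hf 0 s).2.trans (by simpa using layer_le_one hV 0 s)
  exact ⟨f,
    { isMartingale := ⟨fun s => ⟨hnonneg s, hle_one s⟩, hfair⟩
      cauchySeq _ hβ := cauchySeq_of_mem_Icc_alternating_sum hV hf hβ
      frequently_ge _ hβ :=
        frequently_ge_of_alternating_sum_le hV h0 hent hβ fun k s => (hf k s).1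
      frequently_le _ hβ :=
        frequently_le_of_le_alternating_sum hV h0 hent hβ fun k s => (hf k s).2 }⟩

/-! ### Geometric mixtures -/

lemma osc_pos_iff {f : List Bool → ℝ} (hf : Bornology.IsBounded (Set.range f)) :
    0 < osc f β ↔ ¬ CauchySeq fun l => f (seg β l) := by
  constructor
  · intro hpos hC
    obtain ⟨N, hN⟩ := Metric.cauchySeq_iff.1 hC (osc f β / 2) (half_pos hpos)
    have hinf : osc f β ≤ ⨆ p : {n // N ≤ n}, ⨆ q : {n // N ≤ n}, |f (seg β p) - f (seg β q)| :=
      ciInf_le ⟨0, Set.forall_mem_range.2 fun N => Real.iSup_nonneg fun p =>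
        Real.iSup_nonneg fun q => abs_nonneg _⟩ N
    have hsup : ⨆ p : {n // N ≤ n}, ⨆ q : {n // N ≤ n}, |f (seg β p) - f (seg β q)| ≤ osc f β / 2 :=
      ciSup_le fun p => ciSup_le fun q => (hN p p.2 q q.2).le
    linarith
  · refine fun hC => not_le.1 fun hle => hC (Metric.cauchySeq_iff.2 fun ε hε => ?_)
    obtain ⟨N, hN⟩ := exists_lt_of_ciInf_lt (hle.trans_lt hε)
    have hdiam (p q : {n // N ≤ n}) : |f (seg β p) - f (seg β q)| ≤ Metric.diam (Set.range f) :=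
      Metric.dist_le_diam_of_mem hf (Set.mem_range_self _) (Set.mem_range_self _)
    refine ⟨N, fun p hp q hq => lt_of_le_of_lt ?_ hN⟩
    calc |f (seg β p) - f (seg β q)|
        ≤ ⨆ q : {n // N ≤ n}, |f (seg β p) - f (seg β q)| :=
          le_ciSup ⟨_, Set.forall_mem_range.2 (hdiam ⟨p, hp⟩)⟩ ⟨q, hq⟩
      _ ≤ _ := le_ciSup (f := fun p : {n // N ≤ n} => ⨆ q : {n // N ≤ n},
          |f (seg β p) - f (seg β q)|)
          ⟨_, Set.forall_mem_range.2 fun p => ciSup_le (hdiam p)⟩ ⟨p, hp⟩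

/-- The mixture of the martingales `f n` with weights `4⁻¹ ^ (n + 1)`. These decay fast enough for
the oscillation of each term to dominate the remaining terms. -/
noncomputable def mixture (f : ℕ → List Bool → ℝ) (s : List Bool) : ℝ :=
  ∑' n, (1 / 4) ^ (n + 1) * f n s

section Mixture

variable {f : ℕ → List Bool → ℝ}

lemma hasSum_one_fourth_pow_succ : HasSum (fun n : ℕ => (1 / 4 : ℝ) ^ (n + 1)) (1 / 3) := by
  have h := (hasSum_geometric_of_lt_one (r := (1 / 4 : ℝ)) (by norm_num) (by norm_num)).mul_right
    (1 / 4)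
  rw [show (1 - 1 / 4 : ℝ)⁻¹ * (1 / 4) = 1 / 3 by norm_num] at h
  simpa only [pow_succ] using h

lemma hasSum_mixture (hf : ∀ n, IsMartingale (f n)) (s : List Bool) :
    HasSum (fun n => (1 / 4) ^ (n + 1) * f n s) (mixture f s) :=
  (Summable.of_nonneg_of_le (fun n => mul_nonneg (by positivity) ((hf n).1 s).1)
    (fun n => mul_le_of_le_one_right (by positivity) ((hf n).1 s).2)
    hasSum_one_fourth_pow_succ.summable).hasSum

lemma mixture_nonneg (hf : ∀ n, IsMartingale (f n)) (s : List Bool) : 0 ≤ mixture f s :=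
  tsum_nonneg fun n => mul_nonneg (by positivity) ((hf n).1 s).1

lemma mixture_le_one_third (hf : ∀ n, IsMartingale (f n)) (s : List Bool) : mixture f s ≤ 1 / 3 :=
  hasSum_le (fun n => mul_le_of_le_one_right (by positivity) ((hf n).1 s).2) (hasSum_mixture hf s)
    hasSum_one_fourth_pow_succ

lemma isMartingale_mixture (hf : ∀ n, IsMartingale (f n)) : IsMartingale (mixture f) := by
  refine ⟨fun s => ⟨mixture_nonneg hf s, (mixture_le_one_third hf s).trans (by norm_num)⟩,
    fun s => ?_⟩
  have h := ((hasSum_mixture hf (s ++ [false])).add (hasSum_mixture hf (s ++ [true]))).div_const 2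
  simp only [← mul_add, mul_div_assoc, ← (hf _).2 s] at h
  exact (hasSum_mixture hf s).unique h

lemma mixture_eq_add_mixture_succ (hf : ∀ n, IsMartingale (f n)) (s : List Bool) :
    mixture f s = (f 0 s + mixture (fun n => f (n + 1)) s) / 4 := by
  rw [mixture, (hasSum_mixture hf s).summable.tsum_eq_zero_add, mixture, add_div, ← tsum_div_const]
  congr 1
  · ring
  · exact tsum_congr fun n => by ring

lemma cauchySeq_mixture (hf : ∀ n, IsMartingale (f n))
    (hβ : ∀ n, CauchySeq fun l => f n (seg β l)) : CauchySeq fun l => mixture f (seg β l) := by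
  choose a ha using fun n => cauchySeq_tendsto_of_complete (hβ n)
  refine (tendsto_tsum_of_dominated_convergence hasSum_one_fourth_pow_succ.summable
    (fun n => (ha n).const_mul ((1 / 4) ^ (n + 1))) (Eventually.of_forall fun l n => ?_)).cauchySeq
  rw [Real.norm_of_nonneg (mul_nonneg (by positivity) ((hf n).1 _).1)]
  exact mul_le_of_le_one_right (by positivity) ((hf n).1 _).2

variable {G : ℕ → Set (ℕ → Bool)}

lemma notMem_zero_of_cauchySeq_mixture (hf : ∀ n, OscillatesExactlyOn (f n) (G n))
    (hβ : CauchySeq fun l => mixture f (seg β l)) : β ∉ G 0 := by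
  intro h0
  obtain ⟨a, ha⟩ := cauchySeq_tendsto_of_complete hβ
  have hmart (n : ℕ) : IsMartingale (f n) := (hf n).isMartingale
  have hge : 3 / 16 ≤ a := ge_of_tendsto_of_frequently ha <| ((hf 0).frequently_ge β h0).mono
    fun l hl => by linarith [mixture_eq_add_mixture_succ hmart (seg β l),
      mixture_nonneg (fun n => hmart (n + 1)) (seg β l)]
  have hle : a ≤ 7 / 48 := le_of_tendsto_of_frequently ha <| ((hf 0).frequently_le β h0).mono
    fun l hl => by linarith [mixture_eq_add_mixture_succ hmart (seg β l),
      mixture_le_one_third (fun n => hmart (n + 1)) (seg β l)]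
  linarith

lemma notMem_of_cauchySeq_mixture (hf : ∀ n, OscillatesExactlyOn (f n) (G n))
    (hβ : CauchySeq fun l => mixture f (seg β l)) (n : ℕ) : β ∉ G n := by
  induction n generalizing f G with
  | zero => exact notMem_zero_of_cauchySeq_mixture hf hβ
  | succ _ ih =>
    refine ih (f := fun n => f (n + 1)) (G := fun n => G (n + 1)) (fun n => hf (n + 1)) ?_
    obtain ⟨a, ha⟩ := cauchySeq_tendsto_of_complete hβ
    obtain ⟨b, hb⟩ := cauchySeq_tendsto_of_complete
      ((hf 0).cauchySeq β (notMem_zero_of_cauchySeq_mixture hf hβ))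
    refine (((ha.const_mul 4).sub hb).congr fun l => ?_).cauchySeq
    rw [mixture_eq_add_mixture_succ fun n => (hf n).isMartingale]
    ring

theorem divSet_mixture (hf : ∀ n, OscillatesExactlyOn (f n) (G n)) :
    divSet (mixture f) = ⋃ n, G n := by
  have hmart := isMartingale_mixture fun n => (hf n).isMartingale
  ext β
  rw [divSet, Set.mem_ofPred_eq, osc_pos_iff, not_iff_comm, Set.mem_iUnion, not_exists]
  · exact ⟨fun h => cauchySeq_mixture (fun n => (hf n).isMartingale) fun n =>
      (hf n).cauchySeq β (h n), notMem_of_cauchySeq_mixture hf⟩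
  · exact (Metric.isBounded_Icc 0 1).subset (Set.range_subset_iff.2 hmart.1)

end Mixture

end CantorSpace

/-- Every `Σ⁰₃` (countable union of Gδ) subset of `2^ω` of
λ-measure zero is the set of divergence of some martingale. -/
theorem sigma03_null_is_divergence_set
    (μ : Measure (ℕ → Bool))
    (hμ : ∀ s : List Bool, μ (cyl s) = (1/2 : ℝ≥0∞) ^ s.length)
    (B : Set (ℕ → Bool)) (hB : IsSigma03 B) (hB0 : μ B = 0) :
    ∃ f : List Bool → ℝ, IsMartingale f ∧ B = divSet f := by
  have : CantorSpace.IsCoinFlipping μ := ⟨hμ⟩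
  obtain ⟨G, hG, rfl⟩ := hB
  choose f hf using fun n => CantorSpace.exists_oscillatesExactlyOn (hG n)
    (measure_iUnion_null_iff.1 hB0 n)
  exact ⟨CantorSpace.mixture f, CantorSpace.isMartingale_mixture fun n => (hf n).isMartingale,
    (CantorSpace.divSet_mixture hf).symm⟩
end

section
/- Let 𝒢 be a Gδ subset of 2^ω with λ(𝒢) = 0, and let U := {(f,β) ∈ 𝓜 × 𝒢 : β ∈ D(f)}. Then U is a Σ⁰₃ subset of 𝓜 × 𝒢 (a countable union of sets that are Gδ relative to 𝓜 × 𝒢), and the vertical sections {U_f : f ∈ 𝓜} are exactly the Σ⁰₃ subsets of 𝒢 (the countable unions of relatively Gδ subsets of 𝒢); that is, U is 𝓜-universal for the Σ⁰₃ subsets of 𝒢. -/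
open MeasureTheory Filter Topology
open scoped ENNReal

/-!
A null `Gδ` set `H` is the intersection of open sets `U 0 ⊇ U 1 ⊇ ⋯`, each occupying a very small
proportion of the first cylinder of a branch inside its predecessor. By the Lebesgue density theorem
one can interpolate an open set between `U m` and `U (m + 1)` for the relation that the smaller set
has density zero at every point outside the larger one, so the construction of Urysohn's lemma (in
the form of the Luzin–Menchoff theorem) yields a measurable `h` with values in `[m, m + 1]` on
`U m \ U (m + 1)` that is approximately continuous off `H`. Composing `h` with a continuous wave
that is alternately `0` and `1` on the intervals `[2m, 2m + 1]` gives a bounded function whose means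
over cylinders form a martingale: off `H` it converges by approximate continuity, and along a branch
in `H` it is close to `0` and to `1` infinitely often, at the lengths where the branch enters `U m`.

For a countable union of such sets the martingales are added with weights `8⁻⁽ⁿ⁺¹⁾`; at a point of
the union the first oscillating term is too large to be cancelled by the later ones. Conversely,
divergence says that `β` fails the Cauchy criterion, and this is a `Σ⁰₃` condition on `(f, β)`.
-/

section Cylinders

theorem eventually_cylinder_subset {E : ℕ → Type*} [∀ n, TopologicalSpace (E n)]
    [∀ n, DiscreteTopology (E n)] {U : Set (∀ n, E n)} (hU : IsOpen U) {x : ∀ n, E n}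
    (hx : x ∈ U) : ∀ᶠ n in atTop, PiNat.cylinder x n ⊆ U := by
  obtain ⟨_, ⟨y, n, rfl⟩, hxy, hyU⟩ :=
    (PiNat.isTopologicalBasis_cylinders E).exists_subset_of_mem_open hx hU
  rw [← PiNat.mem_cylinder_iff_eq.1 hxy] at hyU
  filter_upwards [eventually_ge_atTop n] with m hm using (PiNat.cylinder_anti x hm).trans hyU

theorem isOpen_setOf_cylinder_subset {E : ℕ → Type*} [∀ n, TopologicalSpace (E n)]
    [∀ n, DiscreteTopology (E n)] (U : Set (∀ n, E n)) (n : ℕ) :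
    IsOpen {x | PiNat.cylinder x n ⊆ U} := by
  refine isOpen_iff_mem_nhds.2 fun x hx => ?_
  filter_upwards [(PiNat.isOpen_cylinder E x n).mem_nhds (PiNat.self_mem_cylinder x n)] with y hy
  exact (PiNat.mem_cylinder_iff_eq.1 hy).trans_subset hx

theorem length_seg (β : ℕ → Bool) (l : ℕ) : (seg β l).length = l := by
  simp [seg]

theorem seg_eq_seg_of_mem_cylinder {β γ : ℕ → Bool} {l : ℕ} (h : γ ∈ PiNat.cylinder β l) :
    seg γ l = seg β l :=
  congrArg List.ofFn (funext fun i => h i i.2)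

theorem cyl_seg (β : ℕ → Bool) (l : ℕ) : cyl (seg β l) = PiNat.cylinder β l := by
  ext γ
  simp [cyl, seg, PiNat.cylinder, Fin.forall_iff]

theorem exists_seg_eq (s : List Bool) : ∃ β, seg β s.length = s :=
  ⟨fun i => s.getD i false, List.ext_getElem (length_seg _ _) (by simp [seg])⟩

theorem mem_cyl_append_singleton {s : List Bool} {b : Bool} {β : ℕ → Bool} :
    β ∈ cyl (s ++ [b]) ↔ β ∈ cyl s ∧ β s.length = b := by
  simp only [cyl, Set.mem_ofPred_eq, Fin.forall_iff, List.get_eq_getElem, List.length_append,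
    List.length_singleton, Nat.forall_lt_succ_right', List.getElem_concat_length]
  refine and_congr_left' (forall₂_congr fun i hi => ?_)
  rw [List.getElem_append_left hi]

theorem cyl_eq_union (s : List Bool) : cyl s = cyl (s ++ [false]) ∪ cyl (s ++ [true]) := by
  ext β
  simp only [Set.mem_union, mem_cyl_append_singleton]
  cases β s.length <;> simp

theorem disjoint_cyl_append (s : List Bool) : Disjoint (cyl (s ++ [false])) (cyl (s ++ [true])) :=
  Set.disjoint_left.2 fun β hf ht => by
    simpa [(mem_cyl_append_singleton.1 hf).2] using (mem_cyl_append_singleton.1 ht).2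

theorem measurableSet_cylinder (β : ℕ → Bool) (l : ℕ) : MeasurableSet (PiNat.cylinder β l) :=
  (PiNat.isOpen_cylinder _ β l).measurableSet

theorem measurableSet_cyl (s : List Bool) : MeasurableSet (cyl s) := by
  obtain ⟨β, hβ⟩ := exists_seg_eq s
  exact hβ ▸ cyl_seg β _ ▸ measurableSet_cylinder β _

end Cylinders

section DyadicScale

theorem exists_dyadic_refinement {α : Type*} {R : α → α → Prop}
    (hR : ∀ a b, R a b → ∃ c, R a c ∧ R c b) {u : ℕ → α} (hu : ∀ i, R (u i) (u (i + 1))) :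
    ∃ c : ℕ → ℕ → α, c 0 = u ∧ (∀ n i, c (n + 1) (2 * i) = c n i) ∧
      ∀ n i, R (c n i) (c n (i + 1)) := by
  have exists_next (v : {v : ℕ → α // ∀ i, R (v i) (v (i + 1))}) :
      ∃ w : {w : ℕ → α // ∀ i, R (w i) (w (i + 1))}, ∀ i, w.1 (2 * i) = v.1 i := by
    choose mid hmid_left hmid_right using fun i => hR _ _ (v.2 i)
    refine ⟨⟨fun k => if Even k then v.1 (k / 2) else mid (k / 2), fun k => ?_⟩, fun i => by simp⟩
    obtain ⟨j, rfl | rfl⟩ := Nat.even_or_odd' k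
    · simpa [Nat.even_add_one, show (2 * j + 1) / 2 = j by omega] using hmid_left j
    · simpa [Nat.even_add_one, show (2 * j + 1) / 2 = j by omega,
        show (2 * j + 1 + 1) / 2 = j + 1 by omega] using hmid_right j
  choose next hnext using exists_next
  let w : ℕ → {v : ℕ → α // ∀ i, R (v i) (v (i + 1))} := Nat.rec ⟨u, hu⟩ fun _ => next
  exact ⟨fun n => (w n).1, rfl, fun n => hnext (w n), fun n => (w n).2⟩

variable {α : Type*} {c : ℕ → ℕ → Set α}

/-- A decreasing family of sets indexed by the nonnegative dyadic rationals, `c n i` being the set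
of index `i / 2 ^ n`. -/
structure IsDyadicScale (c : ℕ → ℕ → Set α) : Prop where
  antitone : ∀ n, Antitone (c n)
  apply_two_mul : ∀ n i, c (n + 1) (2 * i) = c n i

/-- The height of a point in a dyadic scale: the supremum of the indices `i / 2 ^ n` of the sets
containing it, which is `∞` on the intersection of the scale. -/
noncomputable def height (c : ℕ → ℕ → Set α) (x : α) : ℝ≥0∞ :=
  ⨆ n : ℕ, ⨆ i : ℕ, (c n i).indicator (fun _ => (i : ℝ≥0∞) / 2 ^ n) x

theorem measurable_height [MeasurableSpace α] (hc : ∀ n i, MeasurableSet (c n i)) :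
    Measurable (height c) :=
  .iSup fun n => .iSup fun i => measurable_const.indicator (hc n i)

theorem le_height {x : α} {n i : ℕ} (h : x ∈ c n i) : (i : ℝ≥0∞) / 2 ^ n ≤ height c x :=
  le_iSup₂_of_le n i (Set.indicator_of_mem h fun _ => (i : ℝ≥0∞) / 2 ^ n).ge

namespace IsDyadicScale

theorem apply_pow_mul (hc : IsDyadicScale c) (n d i : ℕ) : c (n + d) (2 ^ d * i) = c n i := by
  induction d with
  | zero => simp
  | succ d ih => rw [← ih, ← hc.apply_two_mul (n + d), ← mul_assoc, ← pow_succ', add_assoc]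

theorem height_le (hc : IsDyadicScale c) {x : α} {n j : ℕ} (hx : x ∉ c n j) :
    height c x ≤ (j : ℝ≥0∞) / 2 ^ n := by
  refine iSup₂_le fun m i => ?_
  by_cases hxi : x ∈ c m i
  · have hij : 2 ^ n * i ≤ 2 ^ m * j := by
      rw [← hc.apply_pow_mul m n i] at hxi
      rw [← hc.apply_pow_mul n m j, add_comm n m] at hx
      exact (le_total _ _).resolve_right fun hji => hx (hc.antitone _ hji hxi)
    rw [Set.indicator_of_mem hxi, ENNReal.div_le_iff (by simp) (by finiteness),
      ← ENNReal.mul_div_right_comm, ENNReal.le_div_iff_mul_le (by simp) (by simp), mul_comm,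
      mul_comm (j : ℝ≥0∞)]
    exact_mod_cast hij
  · rw [Set.indicator_of_notMem hxi]
    exact zero_le

theorem toReal_height_mem_Icc (hc : IsDyadicScale c) {x : α} {n i j : ℕ} (hi : x ∈ c n i)
    (hj : x ∉ c n j) : (height c x).toReal ∈ Set.Icc ((i : ℝ) / 2 ^ n) (j / 2 ^ n) := by
  have hfin : (j : ℝ≥0∞) / 2 ^ n ≠ ∞ := ENNReal.div_ne_top (by simp) (by simp)
  have hle := hc.height_le hj
  constructor
  · simpa using ENNReal.toReal_mono (ne_top_of_le_ne_top hfin hle) (le_height hi)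
  · simpa using ENNReal.toReal_mono hfin hle

theorem exists_mem_notMem_succ (hc : IsDyadicScale c) {x : α} (h0 : x ∈ c 0 0) {m : ℕ}
    (hm : x ∉ c 0 m) (n : ℕ) : ∃ i, x ∈ c n i ∧ x ∉ c n (i + 1) := by
  obtain ⟨i, hi, hi'⟩ := Nat.exists_not_and_succ_of_not_zero_of_exists (p := fun i => x ∉ c n i)
    (by simpa [← hc.apply_pow_mul 0 n 0] using h0)
    ⟨2 ^ n * m, by rwa [← hc.apply_pow_mul 0 n m, zero_add] at hm⟩
  exact ⟨i, not_not.1 hi, hi'⟩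

end IsDyadicScale

end DyadicScale

section RelativeDensity

variable {μ : Measure (ℕ → Bool)}

/-- The relative density `μ(A ∩ N_{β↾l}) / μ(N_{β↾l})` of `A` in the cylinder of `β` of length `l`,
encoded as a conditional probability. -/
noncomputable def relDensity (μ : Measure (ℕ → Bool)) (A : Set (ℕ → Bool)) (β : ℕ → Bool) (l : ℕ) :
    ℝ :=
  (ProbabilityTheory.cond μ (PiNat.cylinder β l)).real A

theorem relDensity_nonneg (A : Set (ℕ → Bool)) (β : ℕ → Bool) (l : ℕ) : 0 ≤ relDensity μ A β l :=
  measureReal_nonneg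

theorem relDensity_mono {A B : Set (ℕ → Bool)} (hAB : A ⊆ B) (β : ℕ → Bool) (l : ℕ) :
    relDensity μ A β l ≤ relDensity μ B β l :=
  measureReal_mono hAB

theorem relDensity_union_le (A B : Set (ℕ → Bool)) (β : ℕ → Bool) (l : ℕ) :
    relDensity μ (A ∪ B) β l ≤ relDensity μ A β l + relDensity μ B β l :=
  measureReal_union_le A B

/-- `A` has density `0` at `β`, measured along the cylinders of `β`. -/
def HasDensityZero (μ : Measure (ℕ → Bool)) (A : Set (ℕ → Bool)) (β : ℕ → Bool) : Prop :=
  Tendsto (relDensity μ A β) atTop (𝓝 0)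

theorem HasDensityZero.mono {A B : Set (ℕ → Bool)} {β : ℕ → Bool} (hB : HasDensityZero μ B β)
    (hAB : A ⊆ B) : HasDensityZero μ A β :=
  squeeze_zero (relDensity_nonneg A β) (relDensity_mono hAB β) hB

theorem HasDensityZero.union {A B : Set (ℕ → Bool)} {β : ℕ → Bool} (hA : HasDensityZero μ A β)
    (hB : HasDensityZero μ B β) : HasDensityZero μ (A ∪ B) β :=
  squeeze_zero (relDensity_nonneg _ β) (relDensity_union_le A B β) <| by
    simpa only [add_zero] using Tendsto.add hA hB

theorem hasDensityZero_compl_of_isOpen {U : Set (ℕ → Bool)} (hU : IsOpen U) {β : ℕ → Bool}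
    (hβ : β ∈ U) : HasDensityZero μ Uᶜ β := by
  refine tendsto_const_nhds.congr' ?_
  filter_upwards [eventually_cylinder_subset hU hβ] with l hl
  simp [relDensity, Measure.real, ProbabilityTheory.cond_apply (measurableSet_cylinder β l),
    Set.disjoint_iff_inter_eq_empty.1 (Set.disjoint_compl_right_iff_subset.2 hl)]

/-- `W` has relative density at most `ε l` in every cylinder of length `l` none of whose proper
initial cylinders lies in `U`. At a point outside `U` this covers all cylinders of that point, and
along a branch entering `U` it still covers the first cylinder contained in `U`. -/
def IsThinIn (μ : Measure (ℕ → Bool)) (ε : ℕ → ℝ) (W U : Set (ℕ → Bool)) : Prop :=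
  ∀ β l, (∀ n < l, ¬ PiNat.cylinder β n ⊆ U) → relDensity μ W β l ≤ ε l

theorem IsThinIn.mono {ε : ℕ → ℝ} {U V W : Set (ℕ → Bool)} (hW : IsThinIn μ ε W U)
    (hVW : V ⊆ W) : IsThinIn μ ε V U :=
  fun β l hl => (relDensity_mono hVW β l).trans (hW β l hl)

theorem IsThinIn.hasDensityZero {ε : ℕ → ℝ} {W U : Set (ℕ → Bool)} {β : ℕ → Bool}
    (hW : IsThinIn μ ε W U) (hε : Tendsto ε atTop (𝓝 0)) (hβ : β ∉ U) :
    HasDensityZero μ W β :=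
  squeeze_zero (relDensity_nonneg W β)
    (fun l => hW β l fun n _ hn => hβ (hn (PiNat.self_mem_cylinder β n))) hε

/-- The open set `U` contains the open set `V` well inside it for the density topology: `V` has
density `0` at every point outside `U`. -/
structure Surrounds (μ : Measure (ℕ → Bool)) (U V : Set (ℕ → Bool)) : Prop where
  isOpen_outer : IsOpen U
  isOpen_inner : IsOpen V
  subset : V ⊆ U
  hasDensityZero : ∀ β ∉ U, HasDensityZero μ V β

/-- The first length at which the cylinder of `β` is contained in `U`; it has the junk value `0`
when there is no such length. -/
noncomputable def entryTime (U : Set (ℕ → Bool)) (β : ℕ → Bool) : ℕ :=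
  sInf {l | PiNat.cylinder β l ⊆ U}

theorem cylinder_entryTime_subset {U : Set (ℕ → Bool)} {β : ℕ → Bool} (hU : IsOpen U)
    (hβ : β ∈ U) : PiNat.cylinder β (entryTime U β) ⊆ U :=
  Nat.sInf_mem (s := {l | PiNat.cylinder β l ⊆ U}) (eventually_cylinder_subset hU hβ).exists

theorem IsThinIn.relDensity_entryTime_le {ε : ℕ → ℝ} {U W : Set (ℕ → Bool)}
    (hW : IsThinIn μ ε W U) (β : ℕ → Bool) :
    relDensity μ W β (entryTime U β) ≤ ε (entryTime U β) :=
  hW β _ fun _ => Nat.notMem_of_lt_sInf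

/-- Approximate continuity of `φ` at `β`: the points of the cylinders of `β` at which `φ` leaves a
given neighbourhood of `φ β` form a set of density `0` at `β`. -/
def ApproxContinuousAt {Y : Type*} [TopologicalSpace Y] (μ : Measure (ℕ → Bool))
    (φ : (ℕ → Bool) → Y) (β : ℕ → Bool) : Prop :=
  ∀ s ∈ 𝓝 (φ β), HasDensityZero μ (φ ⁻¹' s)ᶜ β

theorem ApproxContinuousAt.comp {Y Z : Type*} [TopologicalSpace Y] [TopologicalSpace Z]
    {φ : (ℕ → Bool) → Y} {ψ : Y → Z} {β : ℕ → Bool}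
    (hφ : ApproxContinuousAt μ φ β) (hψ : ContinuousAt ψ (φ β)) :
    ApproxContinuousAt μ (ψ ∘ φ) β :=
  fun s hs => hφ (ψ ⁻¹' s) (hψ.preimage_mem_nhds hs)

theorem approxContinuousAt_toReal_height {c : ℕ → ℕ → Set (ℕ → Bool)} (hc : IsDyadicScale c)
    (hsur : ∀ n i, Surrounds μ (c n i) (c n (i + 1))) {β : ℕ → Bool} (h0 : β ∈ c 0 0) {m : ℕ}
    (hm : β ∉ c 0 m) : ApproxContinuousAt μ (fun γ => (height c γ).toReal) β := by
  intro s hs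
  obtain ⟨ε, hε, hball⟩ := Metric.mem_nhds_iff.1 hs
  obtain ⟨n, hn⟩ := exists_pow_lt_of_lt_one (half_pos hε) (one_half_lt_one (α := ℝ))
  obtain ⟨i, hi, hi'⟩ := hc.exists_mem_notMem_succ h0 hm n
  have hexceptional : HasDensityZero μ ((c n i)ᶜ ∪ c n (i + 2)) β :=
    (hasDensityZero_compl_of_isOpen (hsur n i).isOpen_outer hi).union
      ((hsur n (i + 1)).hasDensityZero β hi')
  refine hexceptional.mono (Set.compl_subset_comm.1 fun γ hγ => hball ?_)
  rw [Set.mem_compl_iff, Set.mem_union, not_or, Set.notMem_compl_iff] at hγ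
  have hheight_γ := hc.toReal_height_mem_Icc hγ.1 hγ.2
  have hheight_β := hc.toReal_height_mem_Icc hi fun h => hi' ((hsur n (i + 1)).subset h)
  calc dist (height c γ).toReal (height c β).toReal
      ≤ ((i + 2 : ℕ) : ℝ) / 2 ^ n - i / 2 ^ n := Real.dist_le_of_mem_Icc hheight_γ hheight_β
    _ = 2 * (1 / 2) ^ n := by push_cast; rw [one_div, inv_pow]; ring
    _ < ε := by linarith

end RelativeDensity

section Mean

theorem norm_integral_sub_le_add_measureReal_mul {Ω E : Type*} [MeasurableSpace Ω]
    [NormedAddCommGroup E] [NormedSpace ℝ E] [CompleteSpace E] {P : Measure Ω}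
    [IsProbabilityMeasure P] {φ : Ω → E} (hφ : Integrable φ P) {T : Set Ω} (hT : MeasurableSet T)
    {v : E} {ε M : ℝ} (hε : 0 ≤ ε) (hbound : ∀ᵐ x ∂P, ‖φ x - v‖ ≤ M)
    (hoff : ∀ᵐ x ∂P, x ∉ T → ‖φ x - v‖ ≤ ε) : ‖∫ x, φ x ∂P - v‖ ≤ ε + P.real T * M := by
  have hdom : ∀ᵐ x ∂P, ‖φ x - v‖ ≤ ε + T.indicator (fun _ => M) x := by
    filter_upwards [hbound, hoff] with x hx hxT
    by_cases hxmem : x ∈ T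
    · simpa [hxmem] using hx.trans (le_add_of_nonneg_left hε)
    · simpa [hxmem] using hxT hxmem
  have hindicator : Integrable (T.indicator fun _ => M) P :=
    (integrable_indicator_iff hT).2 integrableOn_const
  calc ‖∫ x, φ x ∂P - v‖ = ‖∫ x, (φ x - v) ∂P‖ := by
        rw [integral_sub hφ (integrable_const v), integral_const, probReal_univ, one_smul]
    _ ≤ ∫ x, (ε + T.indicator (fun _ => M) x) ∂P :=
        norm_integral_le_of_norm_le ((integrable_const ε).add hindicator) hdom
    _ = ε + P.real T * M := by
        rw [integral_add (integrable_const ε) hindicator, integral_const, probReal_univ, one_smul,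
          integral_indicator_const M hT, smul_eq_mul]

/-- The mean of `φ` over the basic cylinder `N_s`. -/
noncomputable def cylMean (μ : Measure (ℕ → Bool)) (φ : (ℕ → Bool) → ℝ) (s : List Bool) : ℝ :=
  ∫ β, φ β ∂(ProbabilityTheory.cond μ (cyl s))

end Mean

section Wave

/-- A continuous function oscillating between `0` and `1`, with value `0` on the intervals
`[4k, 4k + 1]` and value `1` on the intervals `[4k + 2, 4k + 3]`. -/
noncomputable def wave (x : ℝ) : ℝ :=
  min 1 (Metric.infDist x (⋃ k : ℕ, Set.Icc (4 * k : ℝ) (4 * k + 1)))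

theorem continuous_wave : Continuous wave :=
  continuous_const.min (Metric.continuous_infDist_pt _)

theorem wave_mem_Icc (x : ℝ) : wave x ∈ Set.Icc (0 : ℝ) 1 :=
  ⟨le_min zero_le_one Metric.infDist_nonneg, min_le_left _ _⟩

theorem wave_eq_zero {k : ℕ} {x : ℝ} (hx : x ∈ Set.Icc (4 * k : ℝ) (4 * k + 1)) : wave x = 0 := by
  rw [wave, Metric.infDist_zero_of_mem (Set.mem_iUnion_of_mem k hx), min_eq_right zero_le_one]

theorem wave_eq_one {k : ℕ} {x : ℝ} (hx : x ∈ Set.Icc (4 * k + 2 : ℝ) (4 * k + 3)) :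
    wave x = 1 := by
  refine min_eq_left ((Metric.le_infDist ⟨0, Set.mem_iUnion_of_mem 0 (by simp)⟩).2 fun y hy => ?_)
  obtain ⟨j, hj, hj'⟩ := Set.mem_iUnion.1 hy
  obtain hjk | hkj := Nat.lt_or_ge k j
  · have : (k : ℝ) + 1 ≤ j := mod_cast hjk
    exact le_abs.2 (.inr (by linarith [hx.2]))
  · have : (j : ℝ) ≤ k := mod_cast hkj
    exact le_abs.2 (.inl (by linarith [hx.1]))

end Wave

/-- The martingale `g` converges off `H`, while at the points of `H` it returns infinitely often to
both `[0, 1/8]` and `[7/8, 1]`. -/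
structure OscillatesExactlyOn (g : List Bool → ℝ) (H : Set (ℕ → Bool)) : Prop where
  isMartingale : IsMartingale g
  exists_tendsto : ∀ β ∉ H, ∃ L, Tendsto (fun l => g (seg β l)) atTop (𝓝 L)
  frequently_le : ∀ β ∈ H, ∃ᶠ l in atTop, g (seg β l) ≤ 1 / 8
  frequently_ge : ∀ β ∈ H, ∃ᶠ l in atTop, 7 / 8 ≤ g (seg β l)

section FairCoin

variable {μ : Measure (ℕ → Bool)}
  (hμ : ∀ s : List Bool, μ (cyl s) = (1 / 2 : ℝ≥0∞) ^ s.length)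

include hμ

theorem measure_cylinder (β : ℕ → Bool) (l : ℕ) : μ (PiNat.cylinder β l) = (1 / 2 : ℝ≥0∞) ^ l := by
  rw [← cyl_seg, hμ, length_seg]

theorem isProbabilityMeasure_of_cyl : IsProbabilityMeasure μ :=
  ⟨by simpa using measure_cylinder hμ (fun _ => false) 0⟩

theorem measure_cylinder_ne_zero (β : ℕ → Bool) (l : ℕ) : μ (PiNat.cylinder β l) ≠ 0 := by
  simp [measure_cylinder hμ]

attribute [local instance] PiNat.metricSpace in
theorem isUnifLocDoublingMeasure_of_cyl : IsUnifLocDoublingMeasure μ where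
  exists_measure_closedBall_le_mul'' := by
    refine ⟨4, ?_⟩
    filter_upwards [Ioo_mem_nhdsGT one_half_pos] with r hr β
    obtain ⟨n, hn, hn'⟩ := exists_nat_pow_near_of_lt_one (x := 2 * r) (y := 1 / 2)
      (by linarith [hr.1]) (by linarith [hr.2]) one_half_pos one_half_lt_one
    have hball : Metric.closedBall β (2 * r) ⊆ PiNat.cylinder β n := fun γ hγ =>
      PiNat.mem_cylinder_iff_dist_le.2 (hγ.trans hn')
    have hcyl : PiNat.cylinder β (n + 2) ⊆ Metric.closedBall β r := fun γ hγ =>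
      (PiNat.mem_cylinder_iff_dist_le.1 hγ).trans (by rw [pow_succ]; linarith)
    calc μ (Metric.closedBall β (2 * r)) ≤ μ (PiNat.cylinder β n) := measure_mono hball
      _ = 4 * μ (PiNat.cylinder β (n + 2)) := by
        have four_mul_quarter : (4 : ℝ≥0∞) * (1 / 2) ^ 2 = 1 := by
          rw [← ENNReal.toReal_eq_toReal_iff' (by finiteness) (by finiteness)]
          norm_num
        rw [measure_cylinder hμ, measure_cylinder hμ, pow_add, mul_left_comm, four_mul_quarter,
          mul_one]
      _ ≤ 4 * μ (Metric.closedBall β r) := by gcongr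

attribute [local instance] PiNat.metricSpace in
theorem ae_hasDensityZero {V : Set (ℕ → Bool)} (hV : MeasurableSet V) :
    ∀ᵐ β ∂μ, β ∉ V → HasDensityZero μ V β := by
  have := isProbabilityMeasure_of_cyl hμ
  have := isUnifLocDoublingMeasure_of_cyl hμ
  have hball (β : ℕ → Bool) (l : ℕ) :
      Metric.closedBall β ((1 / 2) ^ l) = PiNat.cylinder β l := by
    ext γ
    exact PiNat.mem_cylinder_iff_dist_le.symm
  have hradius : Tendsto (fun l : ℕ => (1 / 2 : ℝ) ^ l) atTop (𝓝[>] 0) :=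
    tendsto_pow_atTop_nhdsWithin_zero_of_lt_one one_half_pos one_half_lt_one
  filter_upwards [ae_imp_of_ae_restrict
    (IsUnifLocDoublingMeasure.ae_tendsto_measure_inter_div μ Vᶜ 1)] with β hβ hβV
  have hdensity := hβ hβV (fun _ => β) _ hradius
    (.of_forall fun l => Metric.mem_closedBall_self (by positivity))
  have hcond (l : ℕ) :
      relDensity μ V β l = 1 - (μ (Vᶜ ∩ PiNat.cylinder β l) / μ (PiNat.cylinder β l)).toReal := by
    have := ProbabilityTheory.cond_isProbabilityMeasure (μ := μ) (measure_cylinder_ne_zero hμ β l)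
    rw [relDensity, ← compl_compl V, probReal_compl_eq_one_sub hV.compl, Measure.real,
      ProbabilityTheory.cond_apply (measurableSet_cylinder β l), compl_compl, Set.inter_comm,
      ENNReal.div_eq_inv_mul]
  simpa only [HasDensityZero, funext hcond, hball, ENNReal.toReal_one, sub_self,
    Function.comp_def] using
    ((ENNReal.tendsto_toReal ENNReal.one_ne_top).comp hdensity).const_sub 1

theorem relDensity_eq (A : Set (ℕ → Bool)) (β : ℕ → Bool) (l : ℕ) :
    relDensity μ A β l = 2 ^ l * μ.real (PiNat.cylinder β l ∩ A) := by
  simp [relDensity, Measure.real, ProbabilityTheory.cond_apply (measurableSet_cylinder β l),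
    measure_cylinder hμ]

theorem exists_isOpen_isThinIn {U Z : Set (ℕ → Bool)} (hU : IsOpen U) (hZU : Z ⊆ U)
    (hZ : μ Z = 0) {ε : ℕ → ℝ} (hε : ∀ l, 0 < ε l) :
    ∃ W, IsOpen W ∧ Z ⊆ W ∧ W ⊆ U ∧ IsThinIn μ ε W U := by
  have := isProbabilityMeasure_of_cyl hμ
  have small_nhd (k : ℕ) : ∃ O, Z ⊆ O ∧ IsOpen O ∧ μ O < ENNReal.ofReal (ε k * (1 / 2) ^ k) :=
    Z.exists_isOpen_lt_of_lt _ (by have := hε k; rw [hZ, ENNReal.ofReal_pos]; positivity)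
  choose O hZO hO hμO using small_nhd
  -- A cylinder of length `l` with no proper initial cylinder inside `U` meets only the pieces with
  -- `l ≤ n`, which lie in `O l`, a set of measure at most `ε l` times that of the cylinder.
  refine ⟨⋃ n, {γ | PiNat.cylinder γ n ⊆ U} ∩ ⋂ k ∈ Set.Iic n, O k, ?_, ?_, ?_, ?_⟩
  · exact isOpen_iUnion fun n => (isOpen_setOf_cylinder_subset U n).inter <|
      (Set.finite_Iic n).isOpen_biInter fun k _ => hO k
  · intro β hβ
    obtain ⟨n, hn⟩ := (eventually_cylinder_subset hU (hZU hβ)).exists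
    exact Set.mem_iUnion.2 ⟨n, hn, Set.mem_iInter₂.2 fun k _ => hZO k hβ⟩
  · exact Set.iUnion_subset fun n γ hγ => hγ.1 (PiNat.self_mem_cylinder γ n)
  · intro β l hl
    set W := ⋃ n, {γ | PiNat.cylinder γ n ⊆ U} ∩ ⋂ k ∈ Set.Iic n, O k
    have hWO : PiNat.cylinder β l ∩ W ⊆ O l := by
      rintro γ ⟨hγβ, hγW⟩
      obtain ⟨n, hnU, hnO⟩ := Set.mem_iUnion.1 hγW
      have hln : l ≤ n := by
        by_contra! hnl
        have hγβn := PiNat.cylinder_anti β hnl.le hγβ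
        exact hl n hnl ((PiNat.mem_cylinder_iff_eq.1 hγβn).symm.trans_subset hnU)
      exact Set.mem_iInter₂.1 hnO l hln
    have hμW : μ.real (PiNat.cylinder β l ∩ W) ≤ ε l * (1 / 2) ^ l :=
      ENNReal.toReal_le_of_le_ofReal (by have := hε l; positivity)
        ((measure_mono hWO).trans (hμO l).le)
    calc relDensity μ W β l = 2 ^ l * μ.real (PiNat.cylinder β l ∩ W) := relDensity_eq hμ W β l
      _ ≤ 2 ^ l * (ε l * (1 / 2) ^ l) := by gcongr
      _ = ε l := by rw [mul_left_comm, ← mul_pow]; norm_num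

theorem Surrounds.exists_between {U V : Set (ℕ → Bool)} (h : Surrounds μ U V) :
    ∃ W, Surrounds μ U W ∧ Surrounds μ W V := by
  -- The exceptional points of `U ∖ V` form a null set, which a thin open set absorbs.
  have hnull : μ {β | ¬ (β ∉ V → HasDensityZero μ V β)} = 0 :=
    ae_iff.1 (ae_hasDensityZero hμ h.isOpen_inner.measurableSet)
  obtain ⟨W, hW, hZW, hWU, hthin⟩ := exists_isOpen_isThinIn hμ h.isOpen_outer
    Set.inter_subset_left (measure_inter_null_of_null_right U hnull)
    (ε := fun l => (1 / 2) ^ l) (fun l => by positivity)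
  refine ⟨V ∪ W, ⟨h.isOpen_outer, h.isOpen_inner.union hW, Set.union_subset h.subset hWU, ?_⟩,
    h.isOpen_inner.union hW, h.isOpen_inner, Set.subset_union_left, ?_⟩
  · intro β hβ
    exact HasDensityZero.union (h.hasDensityZero β hβ)
      (hthin.hasDensityZero
        (tendsto_pow_atTop_nhds_zero_of_lt_one one_half_pos.le one_half_lt_one) hβ)
  · intro β hβ
    rw [Set.mem_union, not_or] at hβ
    by_contra hlim
    by_cases hβU : β ∈ U
    · exact hβ.2 (hZW ⟨hβU, fun hV => hlim (hV hβ.1)⟩)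
    · exact hlim (h.hasDensityZero β hβU)

theorem exists_surrounds_chain {H : Set (ℕ → Bool)} (hH : IsGδ H) (hH0 : μ H = 0) {ε : ℕ → ℝ}
    (hε : ∀ l, 0 < ε l) (hε0 : Tendsto ε atTop (𝓝 0)) :
    ∃ U : ℕ → Set (ℕ → Bool), U 0 = Set.univ ∧ (∀ m, Surrounds μ (U m) (U (m + 1))) ∧
      (∀ m, IsThinIn μ ε (U (m + 1)) (U m)) ∧ ⋂ m, U m = H := by
  obtain ⟨O, hO, rfl⟩ := isGδ_iff_eq_iInter_nat.1 hH
  have exists_next (m : ℕ) (V : {V : Set (ℕ → Bool) // IsOpen V ∧ ⋂ m, O m ⊆ V}) :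
      ∃ W : {W : Set (ℕ → Bool) // IsOpen W ∧ ⋂ m, O m ⊆ W},
        W.1 ⊆ V ∧ W.1 ⊆ O m ∧ IsThinIn μ ε W V := by
    obtain ⟨W, hW, hHW, hWV, hthin⟩ := exists_isOpen_isThinIn hμ V.2.1 V.2.2 hH0 hε
    exact ⟨⟨W ∩ O m, hW.inter (hO m), Set.subset_inter hHW (Set.iInter_subset O m)⟩,
      Set.inter_subset_left.trans hWV, Set.inter_subset_right, hthin.mono Set.inter_subset_left⟩
  choose next hsub hnextO hthin using exists_next
  let U : ℕ → {V : Set (ℕ → Bool) // IsOpen V ∧ ⋂ m, O m ⊆ V} :=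
    Nat.rec ⟨Set.univ, isOpen_univ, Set.subset_univ _⟩ next
  refine ⟨fun m => (U m).1, rfl, fun m => ⟨(U m).2.1, (U (m + 1)).2.1, hsub m _, fun β hβ =>
    (hthin m (U m)).hasDensityZero hε0 hβ⟩, fun m => hthin m _, ?_⟩
  exact (Set.subset_iInter fun m => (Set.iInter_subset _ (m + 1)).trans (hnextO m _)).antisymm
    (Set.subset_iInter fun m => (U m).2.2)

theorem entryTime_lt_entryTime {ε : ℕ → ℝ} {U V : Set (ℕ → Bool)} {β : ℕ → Bool} (hV : IsOpen V)
    (hVU : V ⊆ U) (hthin : IsThinIn μ ε V U) (hε : ∀ l, ε l < 1) (hβ : β ∈ V) :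
    entryTime U β < entryTime V β := by
  have hsub := cylinder_entryTime_subset hV hβ
  refine (Nat.sInf_le (hsub.trans hVU)).lt_of_ne fun heq : entryTime U β = entryTime V β => ?_
  have hfull : relDensity μ V β (entryTime U β) = 1 := by
    rw [relDensity_eq hμ, heq, Set.inter_eq_left.2 hsub, Measure.real, measure_cylinder hμ]
    simp
  exact (hfull ▸ hthin.relDensity_entryTime_le β).not_gt (hε _)

theorem tendsto_entryTime {ε : ℕ → ℝ} {U : ℕ → Set (ℕ → Bool)}
    (hU : ∀ m, Surrounds μ (U m) (U (m + 1))) (hthin : ∀ m, IsThinIn μ ε (U (m + 1)) (U m))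
    (hε : ∀ l, ε l < 1) {β : ℕ → Bool} (hβ : β ∈ ⋂ m, U m) :
    Tendsto (fun m => entryTime (U m) β) atTop atTop :=
  (strictMono_nat_of_lt_succ fun m => entryTime_lt_entryTime hμ (hU m).isOpen_inner (hU m).subset
    (hthin m) hε (Set.mem_iInter.1 hβ (m + 1))).tendsto_atTop

theorem exists_approxContinuousAt_of_surrounds {U : ℕ → Set (ℕ → Bool)} (hU0 : U 0 = Set.univ)
    (hU : ∀ m, Surrounds μ (U m) (U (m + 1))) :
    ∃ h : (ℕ → Bool) → ℝ, Measurable h ∧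
      (∀ m : ℕ, ∀ γ ∈ U m \ U (m + 1), h γ ∈ Set.Icc (m : ℝ) (m + 1)) ∧
      ∀ β ∉ ⋂ m, U m, ApproxContinuousAt μ h β := by
  obtain ⟨c, rfl, hc2, hsur⟩ :=
    exists_dyadic_refinement (fun _ _ hAB => hAB.exists_between hμ) hU
  have hc : IsDyadicScale c := ⟨fun n => antitone_nat_of_succ_le fun i => (hsur n i).subset, hc2⟩
  refine ⟨fun γ => (height c γ).toReal,
    (measurable_height fun n i => (hsur n i).isOpen_outer.measurableSet).ennreal_toReal,
    fun m γ hγ => by simpa using hc.toReal_height_mem_Icc hγ.1 hγ.2, fun β hβ => ?_⟩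
  obtain ⟨m, hm⟩ := not_forall.1 (mt Set.mem_iInter.2 hβ)
  exact approxContinuousAt_toReal_height hc hsur (hU0 ▸ Set.mem_univ β) hm

theorem cond_cyl_isProbabilityMeasure (s : List Bool) :
    IsProbabilityMeasure (ProbabilityTheory.cond μ (cyl s)) :=
  have := isProbabilityMeasure_of_cyl hμ
  ProbabilityTheory.cond_isProbabilityMeasure (by simp [hμ])

theorem cylMean_eq (φ : (ℕ → Bool) → ℝ) (s : List Bool) :
    cylMean μ φ s = 2 ^ s.length * ∫ β in cyl s, φ β ∂μ := by
  simp [cylMean, ProbabilityTheory.cond, integral_smul_measure, hμ]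

section BoundedFunction

variable {φ : (ℕ → Bool) → ℝ} (hφ : Measurable φ) (hφI : ∀ β, φ β ∈ Set.Icc (0 : ℝ) 1)

include hφ hφI

theorem isMartingale_cylMean : IsMartingale (cylMean μ φ) := by
  have := isProbabilityMeasure_of_cyl hμ
  have hint : Integrable φ μ := .of_mem_Icc 0 1 hφ.aemeasurable (ae_of_all _ hφI)
  refine ⟨fun s => ?_, fun s => ?_⟩
  · have := cond_cyl_isProbabilityMeasure hμ s
    exact (convex_Icc 0 1).integral_mem isClosed_Icc (ae_of_all _ hφI)
      (.of_mem_Icc 0 1 hφ.aemeasurable (ae_of_all _ hφI))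
  · simp only [cylMean_eq hμ, List.length_append, List.length_singleton, pow_succ]
    rw [cyl_eq_union s, setIntegral_union (disjoint_cyl_append s) (measurableSet_cyl _)
      hint.integrableOn hint.integrableOn]
    ring

theorem abs_cylMean_seg_sub_le {T : Set (ℕ → Bool)} (hT : MeasurableSet T) {v ε : ℝ}
    (hv : v ∈ Set.Icc (0 : ℝ) 1) (hε : 0 ≤ ε) {β : ℕ → Bool} {l : ℕ}
    (hoff : ∀ γ ∈ PiNat.cylinder β l \ T, |φ γ - v| ≤ ε) :
    |cylMean μ φ (seg β l) - v| ≤ ε + relDensity μ T β l := by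
  have := cond_cyl_isProbabilityMeasure hμ (seg β l)
  rw [relDensity, ← cyl_seg, ← mul_one (Measure.real _ T), ← Real.norm_eq_abs]
  refine norm_integral_sub_le_add_measureReal_mul
    (.of_mem_Icc 0 1 hφ.aemeasurable (ae_of_all _ hφI)) hT hε (ae_of_all _ fun γ => ?_) ?_
  · simpa [Real.dist_eq] using Real.dist_le_of_mem_Icc (hφI γ) hv
  · filter_upwards [ProbabilityTheory.ae_cond_mem (measurableSet_cyl (seg β l))] with γ hγ hγT
    exact hoff γ ⟨cyl_seg β l ▸ hγ, hγT⟩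

theorem tendsto_cylMean_seg {β : ℕ → Bool} (hβ : ApproxContinuousAt μ φ β) :
    Tendsto (fun l => cylMean μ φ (seg β l)) atTop (𝓝 (φ β)) := by
  refine Metric.tendsto_nhds.2 fun ε hε => ?_
  have hsmall := (hβ _ (Metric.closedBall_mem_nhds (φ β) (half_pos hε))).eventually_lt_const
    (half_pos hε)
  filter_upwards [hsmall] with l hl
  have hmean := abs_cylMean_seg_sub_le hμ hφ hφI (hφ Metric.isClosed_closedBall.measurableSet).compl
    (hφI β) (half_pos hε).le (β := β) (l := l) fun γ hγ => not_not.1 hγ.2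
  rw [Real.dist_eq]
  linarith

theorem abs_cylMean_seg_entryTime_sub_le {ε : ℕ → ℝ} {U V : Set (ℕ → Bool)} (hU : IsOpen U)
    (hV : MeasurableSet V) (hthin : IsThinIn μ ε V U) {v : ℝ} (hv : v ∈ Set.Icc (0 : ℝ) 1)
    (hφv : ∀ γ ∈ U \ V, φ γ = v) {β : ℕ → Bool} (hβ : β ∈ U) :
    |cylMean μ φ (seg β (entryTime U β)) - v| ≤ ε (entryTime U β) := by
  have hmean := abs_cylMean_seg_sub_le hμ hφ hφI hV hv le_rfl (β := β) (l := entryTime U β)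
    fun γ hγ => by simp [hφv γ ⟨cylinder_entryTime_subset hU hβ hγ.1, hγ.2⟩]
  rw [zero_add] at hmean
  exact hmean.trans (hthin.relDensity_entryTime_le β)

end BoundedFunction

theorem exists_oscillatesExactlyOn {H : Set (ℕ → Bool)} (hH : IsGδ H) (hH0 : μ H = 0) :
    ∃ g, OscillatesExactlyOn g H := by
  let ε : ℕ → ℝ := fun l => (1 / 8) ^ (l + 1)
  have hε_le (l : ℕ) : ε l ≤ 1 / 8 := pow_le_of_le_one (by norm_num) (by norm_num) l.succ_ne_zero
  obtain ⟨U, hU0, hUsur, hUthin, rfl⟩ := exists_surrounds_chain hμ hH hH0 (ε := ε)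
    (fun l => by positivity) ((tendsto_add_atTop_iff_nat 1).2
      (tendsto_pow_atTop_nhds_zero_of_lt_one (by norm_num) (by norm_num)))
  obtain ⟨h, hh, hhU, hhcont⟩ := exists_approxContinuousAt_of_surrounds hμ hU0 hUsur
  have hwave : Measurable (wave ∘ h) := continuous_wave.measurable.comp hh
  have hwaveI (γ) : (wave ∘ h) γ ∈ Set.Icc (0 : ℝ) 1 := wave_mem_Icc (h γ)
  have tendsto_entry {β} (hβ : β ∈ ⋂ m, U m) : Tendsto (fun m => entryTime (U m) β) atTop atTop :=
    tendsto_entryTime hμ hUsur hUthin (fun l => (hε_le l).trans_lt (by norm_num)) hβ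
  have mean_near {β} (hβ : β ∈ ⋂ m, U m) (m : ℕ) {v : ℝ} (hv : v ∈ Set.Icc (0 : ℝ) 1)
      (hmv : ∀ x ∈ Set.Icc (m : ℝ) (m + 1), wave x = v) :
      |cylMean μ (wave ∘ h) (seg β (entryTime (U m) β)) - v| ≤ 1 / 8 :=
    (abs_cylMean_seg_entryTime_sub_le hμ hwave hwaveI (hUsur m).isOpen_outer
      (hUsur m).isOpen_inner.measurableSet (hUthin m) hv (fun γ hγ => hmv _ (hhU m γ hγ))
      (Set.mem_iInter.1 hβ m)).trans (hε_le _)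
  refine ⟨cylMean μ (wave ∘ h), isMartingale_cylMean hμ hwave hwaveI, fun β hβ => ⟨_,
    tendsto_cylMean_seg hμ hwave hwaveI ((hhcont β hβ).comp continuous_wave.continuousAt)⟩,
    fun β hβ => ?_, fun β hβ => ?_⟩
  · refine (tendsto_entry hβ).frequently (frequently_atTop.2 fun k => ⟨4 * k, by omega, ?_⟩)
    have hclose := mean_near hβ (4 * k) (v := 0) (by simp) fun x hx => wave_eq_zero (k := k) (by
      simpa using hx)
    linarith [(abs_le.1 hclose).2]
  · refine (tendsto_entry hβ).frequently (frequently_atTop.2 fun k => ⟨4 * k + 2, by omega, ?_⟩)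
    have hclose := mean_near hβ (4 * k + 2) (v := 1) (by simp) fun x hx => wave_eq_one (k := k) (by
      push_cast at hx; rwa [add_assoc, show (2 : ℝ) + 1 = 3 by norm_num] at hx)
    linarith [(abs_le.1 hclose).1]

end FairCoin

section Superposition

/-- The weighted sum `∑ 8⁻⁽ⁿ⁺¹⁾ x n`, used to superpose martingales: for terms in `[0, 1]` the
weights make each term dominate the sum of all later ones. -/
noncomputable def superpose (x : ℕ → ℝ) : ℝ :=
  ∑' n, (1 / 8) ^ (n + 1) * x n

theorem summable_eighth_pow : Summable fun n : ℕ => (1 / 8 : ℝ) ^ (n + 1) :=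
  (summable_nat_add_iff 1).2 (summable_geometric_of_lt_one (by norm_num) (by norm_num))

theorem summable_superpose {x : ℕ → ℝ} (hx : ∀ n, x n ∈ Set.Icc (0 : ℝ) 1) :
    Summable fun n => (1 / 8 : ℝ) ^ (n + 1) * x n :=
  summable_eighth_pow.of_nonneg_of_le (fun n => mul_nonneg (by positivity) (hx n).1)
    fun n => mul_le_of_le_one_right (by positivity) (hx n).2

theorem superpose_mem_Icc {x : ℕ → ℝ} (hx : ∀ n, x n ∈ Set.Icc (0 : ℝ) 1) :
    superpose x ∈ Set.Icc (0 : ℝ) (1 / 7) := by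
  refine ⟨tsum_nonneg fun n => mul_nonneg (by positivity) (hx n).1, ?_⟩
  calc superpose x ≤ ∑' n : ℕ, (1 / 8 : ℝ) ^ (n + 1) :=
        (summable_superpose hx).tsum_le_tsum
          (fun n => mul_le_of_le_one_right (by positivity) (hx n).2) summable_eighth_pow
    _ = 1 / 7 := by
        simp only [pow_succ, tsum_mul_right]
        rw [tsum_geometric_of_lt_one (by norm_num) (by norm_num)]
        norm_num

theorem superpose_eq_sum_add {x : ℕ → ℝ} (hx : ∀ n, x n ∈ Set.Icc (0 : ℝ) 1) (n : ℕ) :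
    superpose x = ∑ j ∈ Finset.range n, (1 / 8) ^ (j + 1) * x j +
      (1 / 8) ^ n * superpose fun i => x (i + n) := by
  rw [superpose, superpose, ← (summable_superpose hx).sum_add_tsum_nat_add n, ← tsum_mul_left]
  congr! 3
  ring

theorem superpose_sub_mem_Icc {x : ℕ → ℝ} (hx : ∀ n, x n ∈ Set.Icc (0 : ℝ) 1) :
    superpose x - x 0 / 8 ∈ Set.Icc (0 : ℝ) (1 / 56) := by
  have htail := superpose_mem_Icc fun i => hx (i + 1)
  have hsplit := superpose_eq_sum_add hx 1
  rw [Finset.sum_range_one] at hsplit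
  constructor <;> linarith [htail.1, htail.2]

theorem isMartingale_superpose {g : ℕ → List Bool → ℝ} (hg : ∀ n, IsMartingale (g n)) :
    IsMartingale fun s => superpose fun n => g n s := by
  have hsum (s : List Bool) := summable_superpose fun n => (hg n).1 s
  refine ⟨fun s => ?_, fun s => ?_⟩
  · exact Set.Icc_subset_Icc_right (by norm_num) (superpose_mem_Icc fun n => (hg n).1 s)
  · simp only [superpose]
    rw [← (hsum _).tsum_add (hsum _), ← tsum_div_const]
    refine tsum_congr fun n => ?_
    rw [(hg n).2 s]
    ring

theorem tendsto_superpose {x : ℕ → ℕ → ℝ} (hx : ∀ n l, x n l ∈ Set.Icc (0 : ℝ) 1) {L : ℕ → ℝ}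
    (hL : ∀ n, Tendsto (x n) atTop (𝓝 (L n))) :
    Tendsto (fun l => superpose fun n => x n l) atTop (𝓝 (superpose L)) := by
  refine tendsto_tsum_of_dominated_convergence summable_eighth_pow
    (fun n => (hL n).const_mul _) (.of_forall fun l n => ?_)
  rw [Real.norm_of_nonneg (mul_nonneg (by positivity) (hx n l).1)]
  exact mul_le_of_le_one_right (by positivity) (hx n l).2

theorem not_cauchySeq_of_frequently {x : ℕ → ℝ} {a b : ℝ} (hab : a < b)
    (ha : ∃ᶠ l in atTop, x l ≤ a) (hb : ∃ᶠ l in atTop, b ≤ x l) : ¬ CauchySeq x := fun hx =>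
  have ⟨_, hL⟩ := cauchySeq_tendsto_of_complete hx
  hab.not_ge ((ge_of_tendsto_of_frequently hL hb).trans (le_of_tendsto_of_frequently hL ha))

theorem not_cauchySeq_superpose {x : ℕ → ℕ → ℝ} (hx : ∀ n l, x n l ∈ Set.Icc (0 : ℝ) 1) {n : ℕ}
    (hhead : ∀ j < n, ∃ L, Tendsto (x j) atTop (𝓝 L)) (hle : ∃ᶠ l in atTop, x n l ≤ 1 / 8)
    (hge : ∃ᶠ l in atTop, 7 / 8 ≤ x n l) : ¬ CauchySeq fun l => superpose fun j => x j l := by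
  intro hcauchy
  obtain ⟨L, hL⟩ := cauchySeq_tendsto_of_complete hcauchy
  choose! K hK using hhead
  have hheadsum : Tendsto (fun l => ∑ j ∈ Finset.range n, (1 / 8) ^ (j + 1) * x j l) atTop
      (𝓝 (∑ j ∈ Finset.range n, (1 / 8) ^ (j + 1) * K j)) :=
    tendsto_finsetSum _ fun j hj => (hK j (Finset.mem_range.1 hj)).const_mul _
  have htail (l : ℕ) : (superpose fun i => x (i + n) l) =
      8 ^ n * ((superpose fun j => x j l) - ∑ j ∈ Finset.range n, (1 / 8) ^ (j + 1) * x j l) := by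
    rw [superpose_eq_sum_add (fun j => hx j l) n, add_sub_cancel_left, ← mul_assoc, ← mul_pow]
    norm_num
  have hfirst (l : ℕ) := superpose_sub_mem_Icc fun i => hx (i + n) l
  simp only [zero_add] at hfirst
  refine not_cauchySeq_of_frequently (x := fun l => superpose fun i => x (i + n) l)
    (a := 1 / 64 + 1 / 56) (b := 7 / 64) (by norm_num) (hle.mono fun l hl => ?_)
    (hge.mono fun l hl => ?_) ?_
  · linarith [(hfirst l).2]
  · linarith [(hfirst l).1]
  · simpa only [htail] using ((hL.sub hheadsum).const_mul (8 ^ n)).cauchySeq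

end Superposition

section Divergence

theorem mem_divSet_iff_not_cauchySeq {f : List Bool → ℝ} (hf : ∀ s, f s ∈ Set.Icc (0 : ℝ) 1)
    {β : ℕ → Bool} : β ∈ divSet f ↔ ¬ CauchySeq fun l => f (seg β l) := by
  have hle (p q : ℕ) : |f (seg β p) - f (seg β q)| ≤ 1 := by
    simpa [Real.dist_eq] using Real.dist_le_of_mem_Icc (hf (seg β p)) (hf (seg β q))
  constructor
  · contrapose!
    intro hcauchy
    refine (le_of_forall_pos_le_add fun ε hε => ?_ : osc f β ≤ 0).not_gt
    obtain ⟨N, hN⟩ := Metric.cauchySeq_iff.1 hcauchy ε hε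
    refine (ciInf_le ⟨0, ?_⟩ N).trans ?_
    · rintro _ ⟨N, rfl⟩
      exact Real.iSup_nonneg fun p => Real.iSup_nonneg fun q => abs_nonneg _
    · rw [zero_add]
      exact Real.iSup_le (fun p => Real.iSup_le (fun q => (hN p p.2 q q.2).le) hε.le) hε.le
  · intro hdiv
    simp only [Metric.cauchySeq_iff, not_forall, not_exists, not_lt] at hdiv
    obtain ⟨ε, hε, hε_le⟩ := hdiv
    refine hε.trans_le (le_ciInf fun N => ?_)
    obtain ⟨p, hp, q, hq, hpq⟩ := hε_le N
    refine le_ciSup_of_le ⟨1, ?_⟩ ⟨p, hp⟩ (le_ciSup_of_le ⟨1, ?_⟩ ⟨q, hq⟩ hpq)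
    · rintro _ ⟨p, rfl⟩
      exact Real.iSup_le (fun q => hle _ _) zero_le_one
    · rintro _ ⟨q, rfl⟩
      exact hle _ _

theorem exists_isMartingale_divSet_eq_iUnion {H : ℕ → Set (ℕ → Bool)}
    (hH : ∀ n, ∃ g, OscillatesExactlyOn g (H n)) : ∃ f, IsMartingale f ∧ divSet f = ⋃ n, H n := by
  choose g hg using hH
  have hf := isMartingale_superpose fun n => (hg n).isMartingale
  have hgI (β : ℕ → Bool) (n l : ℕ) := (hg n).isMartingale.1 (seg β l)
  refine ⟨_, hf, Set.ext fun β => ?_⟩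
  rw [mem_divSet_iff_not_cauchySeq hf.1]
  refine ⟨fun hdiv => ?_, fun hβ => ?_⟩
  · by_contra hβ
    simp only [Set.mem_iUnion, not_exists] at hβ
    choose L hL using fun n => (hg n).exists_tendsto β (hβ n)
    exact hdiv (tendsto_superpose (hgI β) hL).cauchySeq
  · classical
    have hex : ∃ n, β ∈ H n := Set.mem_iUnion.1 hβ
    exact not_cauchySeq_superpose (hgI β)
      (fun j hj => (hg j).exists_tendsto β (Nat.find_min hex hj))
      ((hg _).frequently_le β (Nat.find_spec hex)) ((hg _).frequently_ge β (Nat.find_spec hex))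

end Divergence

section BorelClasses

theorem IsSigma03.preimage {X Y : Type*} [TopologicalSpace X] [TopologicalSpace Y] {S : Set Y}
    (hS : IsSigma03 S) {φ : X → Y} (hφ : Continuous φ) : IsSigma03 (φ ⁻¹' S) := by
  obtain ⟨g, hg, rfl⟩ := hS
  exact ⟨fun n => φ ⁻¹' g n, fun n => (hg n).preimage hφ, Set.preimage_iUnion⟩

theorem isSigma03_setOf_not_cauchySeq {X M : Type*} [TopologicalSpace X] [PseudoMetricSpace M]
    {F : ℕ → X → M} (hF : ∀ l, Continuous (F l)) :
    IsSigma03 {x | ¬ CauchySeq fun l => F l x} := by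
  refine ⟨fun k => ⋂ N : ℕ, ⋃ p ≥ N, ⋃ q ≥ N, {x | 1 / ((k : ℝ) + 1) < dist (F p x) (F q x)},
    fun k => .iInter_of_isOpen fun N => isOpen_biUnion fun p _ => isOpen_biUnion fun q _ =>
      isOpen_lt continuous_const ((hF p).dist (hF q)), Set.ext fun x => ?_⟩
  simp only [Set.mem_ofPred_eq, Set.mem_iUnion, Set.mem_iInter, exists_prop]
  constructor
  · simp only [Metric.cauchySeq_iff, not_forall, not_exists, not_lt]
    rintro ⟨ε, hε, hε_le⟩
    obtain ⟨k, hk⟩ := exists_nat_one_div_lt hε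
    refine ⟨k, fun N => ?_⟩
    obtain ⟨p, hp, q, hq, hpq⟩ := hε_le N
    exact ⟨p, hp, q, hq, hk.trans_le hpq⟩
  · rintro ⟨k, hk⟩ hcauchy
    obtain ⟨N, hN⟩ := Metric.cauchySeq_iff.1 hcauchy (1 / ((k : ℝ) + 1)) (by positivity)
    obtain ⟨p, hp, q, hq, hpq⟩ := hk N
    exact hpq.not_gt (hN p hp q hq)

theorem isGδ_image_val {X : Type*} [TopologicalSpace X] {G : Set X} (hG : IsGδ G) {S : Set G}
    (hS : IsGδ S) : IsGδ (Subtype.val '' S) := by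
  obtain ⟨O, hO, rfl⟩ := isGδ_iff_eq_iInter_nat.1 hS
  choose V hV hVO using fun n => isOpen_induced_iff.1 (hO n)
  have himage : Subtype.val '' (⋂ n, O n) = G ∩ ⋂ n, V n := by
    simp only [← hVO, ← Set.preimage_iInter, Subtype.image_preimage_val]
  exact himage ▸ hG.inter (.iInter_of_isOpen hV)

theorem continuous_eval_seg (l : ℕ) :
    Continuous fun p : (List Bool → ℝ) × (ℕ → Bool) => p.1 (seg p.2 l) := by
  refine continuous_iff_continuousAt.2 fun ⟨f, β⟩ => ?_
  have hfixed : Continuous fun p : (List Bool → ℝ) × (ℕ → Bool) => p.1 (seg β l) :=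
    (continuous_apply _).comp continuous_fst
  refine hfixed.continuousAt.congr ?_
  filter_upwards [continuous_snd.continuousAt.preimage_mem_nhds
    ((PiNat.isOpen_cylinder _ β l).mem_nhds (PiNat.self_mem_cylinder β l))] with p hp
  rw [seg_eq_seg_of_mem_cylinder hp]

theorem isSigma03_setOf_mem_divSet (G : Set (ℕ → Bool)) :
    IsSigma03 {p : {f : List Bool → ℝ // IsMartingale f} × G |
      (p.2 : ℕ → Bool) ∈ divSet p.1.1} := by
  have hdiv (p : {f : List Bool → ℝ // IsMartingale f} × G) :
      (p.2 : ℕ → Bool) ∈ divSet p.1.1 ↔ ¬ CauchySeq fun l => p.1.1 (seg p.2 l) :=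
    mem_divSet_iff_not_cauchySeq p.1.2.1
  simp only [hdiv]
  exact isSigma03_setOf_not_cauchySeq fun l =>
    (continuous_eval_seg l).comp (continuous_subtype_val.prodMap continuous_subtype_val)

end BorelClasses

/-- For a Gδ set `𝒢 ⊆ 2^ω` of λ-measure zero, the set
`U = {(f,β) ∈ 𝓜 × 𝒢 : β ∈ D(f)}` is `Σ⁰₃` and its vertical sections are
exactly the `Σ⁰₃` subsets of `𝒢`, i.e. `U` is `𝓜`-universal for them. -/
theorem divergence_universal_sigma03
    (μ : Measure (ℕ → Bool))
    (hμ : ∀ s : List Bool, μ (cyl s) = (1/2 : ℝ≥0∞) ^ s.length)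
    (G : Set (ℕ → Bool)) (hG : IsGδ G) (hG0 : μ G = 0) :
    IsSigma03 {p : {f : List Bool → ℝ // IsMartingale f} × ↥G |
        (p.2 : ℕ → Bool) ∈ divSet p.1.1} ∧
    (∀ f : {f : List Bool → ℝ // IsMartingale f},
        IsSigma03 {β : ↥G | (β : ℕ → Bool) ∈ divSet f.1}) ∧
    (∀ S : Set ↥G, IsSigma03 S →
        ∃ f : {f : List Bool → ℝ // IsMartingale f},
          {β : ↥G | (β : ℕ → Bool) ∈ divSet f.1} = S) := by
  refine ⟨isSigma03_setOf_mem_divSet G, fun f => ?_, ?_⟩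
  · exact (isSigma03_setOf_mem_divSet G).preimage (φ := fun β => (f, β)) (Continuous.prodMk_right f)
  · rintro S ⟨s, hs, rfl⟩
    have hnull (n : ℕ) : μ (Subtype.val '' s n) = 0 :=
      measure_mono_null (Subtype.coe_image_subset G (s n)) hG0
    obtain ⟨f, hf, hdiv⟩ := exists_isMartingale_divSet_eq_iUnion fun n =>
      exists_oscillatesExactlyOn hμ (isGδ_image_val hG (hs n)) (hnull n)
    refine ⟨⟨f, hf⟩, ?_⟩
    calc {β : ↥G | (β : ℕ → Bool) ∈ divSet f} = Subtype.val ⁻¹' (Subtype.val '' ⋃ n, s n) := by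
          rw [Set.image_iUnion, ← hdiv]; rfl
      _ = ⋃ n, s n := Set.preimage_image_eq _ Subtype.val_injective
end
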